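/- Let X be a locally connected continuum contained in the Euclidean plane ℝ². Then the properties wLFPP, LFPP, wLPPP and LPPP for X are mutually equivalent. -/

import Mathlib

/-- A space has the fixed point property: every continuous self-map has a fixed point. -/
def HasFPP (Y : Type*) [TopologicalSpace Y] : Prop :=
  ∀ f : Y → Y, Continuous f → ∃ x, f x = x

/-- A space has the periodic point property: every continuous self-map has a periodic point. -/
def HasPPP (Y : Type*) [TopologicalSpace Y] : Prop :=
  ∀ f : Y → Y, Continuous f → ∃ x, ∃ n : ℕ, 1 ≤ n ∧ f^[n] x = x

/-- Local fixed point property: there is an open basis whose members have closures with FPP. -/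
def HasLFPP (Y : Type*) [TopologicalSpace Y] : Prop :=
  ∃ 𝓑 : Set (Set Y), TopologicalSpace.IsTopologicalBasis 𝓑 ∧
    ∀ B ∈ 𝓑, HasFPP ↥(closure B)

/-- Weak local fixed point property. -/
def HasWLFPP (Y : Type*) [TopologicalSpace Y] : Prop :=
  ∃ 𝓑 : Set (Set Y), TopologicalSpace.IsTopologicalBasis 𝓑 ∧
    ∀ B ∈ 𝓑, ∀ f : Y → Y, Continuous f → f '' closure B ⊆ B → ∃ x ∈ B, f x = x

/-- Local periodic point property. -/
def HasLPPP (Y : Type*) [TopologicalSpace Y] : Prop :=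
  ∃ 𝓑 : Set (Set Y), TopologicalSpace.IsTopologicalBasis 𝓑 ∧
    ∀ B ∈ 𝓑, HasPPP ↥(closure B)

/-- Weak local periodic point property. -/
def HasWLPPP (Y : Type*) [TopologicalSpace Y] : Prop :=
  ∃ 𝓑 : Set (Set Y), TopologicalSpace.IsTopologicalBasis 𝓑 ∧
    ∀ B ∈ 𝓑, ∀ f : Y → Y, Continuous f → f '' closure B ⊆ B →
      ∃ x ∈ B, ∃ n : ℕ, 1 ≤ n ∧ f^[n] x = x

/-- A subset is a simple closed curve if it is homeomorphic to the unit circle. -/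
def IsSimpleClosedCurve {α : Type*} [TopologicalSpace α] (S : Set α) : Prop :=
  Nonempty (↥S ≃ₜ ↥(Metric.sphere (0 : EuclideanSpace ℝ (Fin 2)) 1))

/-- Covering dimension at most `n`: every finite open cover admits an open shrinking
of order at most `n + 1`. -/
def CoveringDimLE (Y : Type*) [TopologicalSpace Y] (n : ℕ) : Prop :=
  ∀ (ι : Type) [Finite ι] (U : ι → Set Y), (∀ i, IsOpen (U i)) → (⋃ i, U i) = Set.univ →
    ∃ V : ι → Set Y, (∀ i, IsOpen (V i)) ∧ (∀ i, V i ⊆ U i) ∧ (⋃ i, V i) = Set.univ ∧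
      ∀ y : Y, {i | y ∈ V i}.ncard ≤ n + 1

/-- A dendrite: a locally connected (metric) continuum containing no simple closed curve. -/
def IsDendrite {α : Type*} [TopologicalSpace α] (D : Set α) : Prop :=
  IsCompact D ∧ IsConnected D ∧ LocallyConnectedSpace ↥D ∧ ∀ S ⊆ D, ¬ IsSimpleClosedCurve S

/-- A local dendrite: every point has a closed neighborhood which is a dendrite. -/
def IsLocalDendrite (Y : Type*) [TopologicalSpace Y] : Prop :=
  ∀ y : Y, ∃ N : Set Y, N ∈ nhds y ∧ IsClosed N ∧ IsDendrite N

/-!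
Of the four properties wLPPP is the weakest and LFPP the strongest, so the point is that wLPPP
implies LFPP. Under wLPPP no point of `X` has arbitrarily small bounded complementary components
around it. For if such a component lies within the neighbourhood `B` of `p`, then by Borsuk's
theorem `B` contains a loop that is essential in the complement of a point `u ∉ X`. Cut down to a
minimal one, it becomes a simple closed curve winding once around `u`, because a path from `0` to
`n > 1` has a horizontal chord of length `1` or `n - 1`. By Tietze's theorem for the logarithm, `X`
retracts onto this curve, and the retraction followed by a rotation of infinite order maps `X` into
`B` without periodic points.

Conversely, let `U` be a small connected neighbourhood of `p` with property S. Then `X` contains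
the union `Y` of the closure of `U` and the bounded components of its complement. A map `f` of `Y`
without fixed points extends to a neighbourhood, and uniform local connectedness of the closure of
`U` yields a logarithm of `(z - f z) / (z - u)` just outside of `Y`, which contradicts the fact
that a map of the plane that agrees with `z - u` outside of a bounded set has a zero. So `Y` has
the fixed point property.
-/

section Properties
variable {Y Z : Type*} [TopologicalSpace Y] [TopologicalSpace Z]

theorem HasFPP.hasPPP (h : HasFPP Y) : HasPPP Y := fun f hf ↦
  let ⟨x, hx⟩ := h f hf
  ⟨x, 1, le_rfl, hx⟩

theorem HasFPP.of_homeomorph (e : Y ≃ₜ Z) (h : HasFPP Y) : HasFPP Z := fun f hf ↦ by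
  obtain ⟨y, hy⟩ := h (e.symm ∘ f ∘ e) (e.symm.continuous.comp (hf.comp e.continuous))
  exact ⟨e y, e.symm_apply_eq.1 hy⟩

theorem HasLFPP.hasLPPP (h : HasLFPP Y) : HasLPPP Y :=
  let ⟨𝓑, h𝓑, hfpp⟩ := h
  ⟨𝓑, h𝓑, fun B hB ↦ (hfpp B hB).hasPPP⟩

theorem HasWLFPP.hasWLPPP (h : HasWLFPP Y) : HasWLPPP Y := by
  obtain ⟨𝓑, h𝓑, hfix⟩ := h
  refine ⟨𝓑, h𝓑, fun B hB f hf hfB ↦ ?_⟩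
  obtain ⟨x, hxB, hx⟩ := hfix B hB f hf hfB
  exact ⟨x, hxB, 1, le_rfl, hx⟩

theorem HasLFPP.hasWLFPP (h : HasLFPP Y) : HasWLFPP Y := by
  obtain ⟨𝓑, h𝓑, hfpp⟩ := h
  refine ⟨𝓑, h𝓑, fun B hB f hf hfB ↦ ?_⟩
  have hmaps : Set.MapsTo f (closure B) (closure B) := fun x hx ↦
    subset_closure (hfB ⟨x, hx, rfl⟩)
  obtain ⟨x, hx⟩ := hfpp B hB (hmaps.restrict f _ _) (hf.restrict hmaps)
  have hfx : f x = x := congrArg Subtype.val hx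
  exact ⟨x, hfx ▸ hfB ⟨x, x.2, rfl⟩, hfx⟩

theorem HasLPPP.hasWLPPP (h : HasLPPP Y) : HasWLPPP Y := by
  obtain ⟨𝓑, h𝓑, hppp⟩ := h
  refine ⟨𝓑, h𝓑, fun B hB f hf hfB ↦ ?_⟩
  have hmaps : Set.MapsTo f (closure B) (closure B) := fun x hx ↦
    subset_closure (hfB ⟨x, hx, rfl⟩)
  obtain ⟨x, n, hn, hx⟩ := hppp B hB (hmaps.restrict f _ _) (hf.restrict hmaps)
  have hfx : f^[n] x = x := by
    rw [hmaps.iterate_restrict n] at hx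
    exact congrArg Subtype.val hx
  obtain ⟨m, rfl⟩ := Nat.exists_eq_succ_of_ne_zero (Nat.one_le_iff_ne_zero.1 hn)
  have hxB : f^[m + 1] x ∈ B := by
    rw [Function.iterate_succ_apply']
    exact hfB ⟨_, hmaps.iterate m x.2, rfl⟩
  exact ⟨x, hfx ▸ hxB, m + 1, hn, hfx⟩

theorem HasLFPP.of_homeomorph (e : Y ≃ₜ Z) (h : HasLFPP Y) : HasLFPP Z := by
  obtain ⟨𝓑, h𝓑, hfpp⟩ := h
  refine ⟨_, h𝓑.isInducing e.symm.isInducing, ?_⟩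
  rintro _ ⟨B, hB, rfl⟩
  rw [← e.symm.preimage_closure, ← e.image_eq_preimage_symm]
  exact (hfpp B hB).of_homeomorph (e.image _)

theorem HasWLPPP.of_homeomorph (e : Y ≃ₜ Z) (h : HasWLPPP Y) : HasWLPPP Z := by
  obtain ⟨𝓑, h𝓑, hper⟩ := h
  refine ⟨_, h𝓑.isInducing e.symm.isInducing, ?_⟩
  rintro _ ⟨B, hB, rfl⟩ f hf hfB
  obtain ⟨y, hyB, n, hn, hy⟩ := hper B hB (e.symm ∘ f ∘ e)
    (e.symm.continuous.comp (hf.comp e.continuous)) (by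
      rintro _ ⟨y, hy, rfl⟩
      refine hfB ⟨e y, ?_, rfl⟩
      rw [← e.symm.preimage_closure]
      simpa using hy)
  have hconj : Function.Semiconj e (e.symm ∘ f ∘ e) f := fun y ↦ by simp
  refine ⟨e y, by simpa using hyB, n, hn, ?_⟩
  rw [← (hconj.iterate_right n).eq, hy]

theorem hasFPP_of_forall_continuousOn {s : Set Y}
    (h : ∀ f : Y → Y, ContinuousOn f s → Set.MapsTo f s s → ∃ x ∈ s, f x = x) :
    HasFPP s := fun f hf ↦ by
  set F : Y → Y := Function.extend Subtype.val (Subtype.val ∘ f) id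
  have hF : s.domRestrict F = Subtype.val ∘ f :=
    funext fun x ↦ Subtype.val_injective.extend_apply _ _ x
  obtain ⟨x, hx, hFx⟩ := h F
    (continuousOn_iff_continuous_domRestrict.2 (hF ▸ continuous_subtype_val.comp hf))
    fun x hx ↦ Set.mem_of_eq_of_mem (congrFun hF ⟨x, hx⟩) (f ⟨x, hx⟩).2
  exact ⟨⟨x, hx⟩, Subtype.ext ((congrFun hF ⟨x, hx⟩).symm.trans hFx)⟩

end Properties

namespace PlaneContinuum
open Bornology Filter Metric Set Topology

section Frontier
variable {α : Type*} [TopologicalSpace α]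

theorem nonempty_inter_frontier_of_isPreconnected {s t : Set α} (hs : IsPreconnected s)
    (hst : (s ∩ t).Nonempty) (hst' : ¬ s ⊆ t) : (s ∩ frontier t).Nonempty := by
  by_contra h
  have hsub : s ⊆ interior t ∪ (closure t)ᶜ := fun x hx ↦ by
    have : x ∉ frontier t := fun hxt ↦ h ⟨x, hx, hxt⟩
    rwa [← mem_compl_iff, compl_frontier_eq_union_interior, interior_compl] at this
  rcases hs.subset_or_subset isOpen_interior isClosed_closure.isOpen_compl
    (disjoint_compl_right.mono_left interior_subset_closure) hsub with hin | hout
  · exact hst' (hin.trans interior_subset)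
  · obtain ⟨x, hxs, hxt⟩ := hst
    exact hout hxs (subset_closure hxt)

theorem frontier_connectedComponentIn_compl_subset [LocallyConnectedSpace α] {K : Set α}
    (hK : IsClosed K) (x : α) : frontier (connectedComponentIn Kᶜ x) ⊆ K := by
  intro z hz
  by_contra hzK
  obtain ⟨w, hwz, hwx⟩ := mem_closure_iff.1 (frontier_subset_closure hz) _
    (hK.isOpen_compl.connectedComponentIn (x := z)) (mem_connectedComponentIn hzK)
  rw [hK.isOpen_compl.connectedComponentIn.frontier_eq, connectedComponentIn_eq hwx,
    ← connectedComponentIn_eq hwz] at hz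
  exact hz.2 (mem_connectedComponentIn hzK)

end Frontier

section Fill
variable {E : Type*} [NormedAddCommGroup E]

/-- The topological hull of `K`: the union of `K` with the bounded components of its complement.
Points of `K` belong to it because `connectedComponentIn Kᶜ x = ∅` for `x ∈ K`. -/
def fill (K : Set E) : Set E :=
  {x | IsBounded (connectedComponentIn Kᶜ x)}

theorem subset_fill (K : Set E) : K ⊆ fill K := fun x hx ↦ by
  simp [fill, connectedComponentIn_eq_empty (notMem_compl_iff.2 hx)]

theorem connectedComponentIn_subset_fill_of_isBounded {K : Set E} {x : E}
    (hx : IsBounded (connectedComponentIn Kᶜ x)) : connectedComponentIn Kᶜ x ⊆ fill K :=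
  fun y hy ↦ by rwa [fill, mem_ofPred_eq, ← connectedComponentIn_eq hy]

theorem connectedComponentIn_subset_fill {K X : Set E} (hKX : K ⊆ X) {x : E} (hx : x ∈ fill K) :
    connectedComponentIn Xᶜ x ⊆ fill K :=
  (connectedComponentIn_mono x (compl_subset_compl.2 hKX)).trans
    (connectedComponentIn_subset_fill_of_isBounded hx)

variable [NormedSpace ℝ E]

theorem isPreconnected_compl_closedBall (hE : 1 < Module.rank ℝ E) (p : E) (r : ℝ) :
    IsPreconnected (closedBall p r)ᶜ := by
  rcases lt_or_ge r 0 with hr | hr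
  · rw [closedBall_eq_empty.2 hr, compl_empty]
    exact isPreconnected_univ
  have polar : (closedBall p r)ᶜ = (fun x : ℝ × E ↦ p + x.1 • x.2) '' (Ioi r ×ˢ sphere 0 1) := by
    ext z
    simp only [mem_compl_iff, mem_closedBall, not_le, mem_image, mem_prod, mem_Ioi,
      mem_sphere_zero_iff_norm, Prod.exists]
    constructor
    · intro hz
      have hne : ‖z - p‖ ≠ 0 := (hr.trans_lt (dist_eq_norm z p ▸ hz)).ne'
      refine ⟨‖z - p‖, ‖z - p‖⁻¹ • (z - p), ⟨dist_eq_norm z p ▸ hz, ?_⟩, ?_⟩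
      · rw [norm_smul, norm_inv, norm_norm, inv_mul_cancel₀ hne]
      · rw [smul_inv_smul₀ hne, add_sub_cancel]
    · rintro ⟨t, v, ⟨ht, hv⟩, rfl⟩
      rwa [dist_eq_norm, add_sub_cancel_left, norm_smul, hv, mul_one,
        Real.norm_of_nonneg (hr.trans ht.le)]
  rw [polar]
  exact (isPreconnected_Ioi.prod (isPreconnected_sphere hE 0 1)).image _
    (Continuous.continuousOn (by fun_prop))

theorem not_isBounded_compl_closedBall [Nontrivial E] (p : E) (r : ℝ) :
    ¬ IsBounded (closedBall p r)ᶜ := fun h ↦ by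
  have := (isBounded_closedBall (x := p) (r := r)).union h
  rw [union_compl_self] at this
  exact (NormedSpace.cobounded_neBot ℝ E).ne (cobounded_eq_bot_iff.2 ⟨this⟩)

theorem fill_subset_closedBall (hE : 1 < Module.rank ℝ E) {K : Set E} {p : E} {r : ℝ}
    (hK : K ⊆ closedBall p r) : fill K ⊆ closedBall p r := by
  have : Nontrivial E := rank_pos_iff_nontrivial.1 (zero_lt_one.trans hE)
  intro x hx
  by_contra hxp
  exact not_isBounded_compl_closedBall p r <| hx.subset <|
    (isPreconnected_compl_closedBall hE p r).subset_connectedComponentIn hxp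
      (compl_subset_compl.2 hK)

theorem isClosed_fill {K : Set E} (hK : IsClosed K) : IsClosed (fill K) := by
  refine isOpen_compl_iff.1 (isOpen_iff_mem_nhds.2 fun x hx ↦ ?_)
  refine Filter.mem_of_superset (hK.isOpen_compl.connectedComponentIn.mem_nhds
    (mem_connectedComponentIn fun hxK ↦ hx (subset_fill K hxK))) fun y hy hyK ↦ hx ?_
  rwa [fill, mem_ofPred_eq, connectedComponentIn_eq hy]

theorem frontier_fill_subset {K : Set E} (hK : IsClosed K) : frontier (fill K) ⊆ K := by
  intro x hx
  by_contra hxK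
  have hxfill : x ∈ fill K := (isClosed_fill hK).frontier_subset hx
  exact hx.2 (mem_interior.2 ⟨_, connectedComponentIn_subset_fill_of_isBounded hxfill,
    hK.isOpen_compl.connectedComponentIn, mem_connectedComponentIn hxK⟩)

theorem isCompact_fill [ProperSpace E] (hE : 1 < Module.rank ℝ E) {K : Set E} (hK : IsCompact K) :
    IsCompact (fill K) := by
  obtain ⟨r, hKr⟩ := hK.isBounded.subset_closedBall 0
  exact (isCompact_closedBall _ _).of_isClosed_subset (isClosed_fill hK.isClosed)
    (fill_subset_closedBall hE hKr)

-- Every unbounded complementary component of `K` contains the complement of a large ball.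
theorem isPreconnected_compl_fill (hE : 1 < Module.rank ℝ E) {K : Set E} (hK : IsBounded K) :
    IsPreconnected (fill K)ᶜ := by
  obtain ⟨r, hKr⟩ := hK.subset_closedBall 0
  have far : ∀ x ∉ fill K, (closedBall 0 r)ᶜ ⊆ connectedComponentIn Kᶜ x := fun x hx ↦ by
    obtain ⟨y, hyx, hyr⟩ : ∃ y ∈ connectedComponentIn Kᶜ x, y ∉ closedBall 0 r :=
      not_subset.1 fun h ↦ hx (isBounded_closedBall.subset h)
    rw [connectedComponentIn_eq hyx]
    exact (isPreconnected_compl_closedBall hE 0 r).subset_connectedComponentIn hyr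
      (compl_subset_compl.2 hKr)
  have sub : ∀ x ∉ fill K, connectedComponentIn Kᶜ x ⊆ (fill K)ᶜ := fun x hx y hy hyK ↦
    hx <| by rwa [fill, mem_ofPred_eq, connectedComponentIn_eq hy]
  have : Nontrivial E := rank_pos_iff_nontrivial.1 (zero_lt_one.trans hE)
  obtain ⟨q, hq⟩ : ((closedBall (0 : E) r)ᶜ).Nonempty := nonempty_iff_ne_empty.2 fun h ↦
    not_isBounded_compl_closedBall 0 r (h ▸ isBounded_empty)
  refine isPreconnected_of_forall q fun x hx ↦ ⟨_, sub x hx, far x hx hq,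
    mem_connectedComponentIn fun hxK ↦ hx (subset_fill K hxK),
    isPreconnected_connectedComponentIn⟩

-- The closure of a bounded complementary component is connected and meets `K`.
theorem isConnected_fill {K : Set E} (hK : IsClosed K) (hKc : IsConnected K) :
    IsConnected (fill K) := by
  obtain ⟨k, hk⟩ := hKc.nonempty
  refine ⟨⟨k, subset_fill K hk⟩, isPreconnected_of_forall k fun x hx ↦ ?_⟩
  by_cases hxK : x ∈ K
  · exact ⟨K, subset_fill K, hk, hxK, hKc.isPreconnected⟩
  set C := connectedComponentIn Kᶜ x
  have hCK : closure C ⊆ fill K := closure_minimal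
    (connectedComponentIn_subset_fill_of_isBounded hx) (isClosed_fill hK)
  have hC_ne_univ : C ≠ univ := fun h ↦ connectedComponentIn_subset Kᶜ x
    (h ▸ mem_univ k : k ∈ C) hk
  obtain ⟨z, hz⟩ : (frontier C).Nonempty :=
    nonempty_frontier_iff.2 ⟨⟨x, mem_connectedComponentIn hxK⟩, hC_ne_univ⟩
  exact ⟨K ∪ closure C, union_subset (subset_fill K) hCK, .inl hk,
    .inr (subset_closure (mem_connectedComponentIn hxK)), hKc.isPreconnected.union z
      (frontier_connectedComponentIn_compl_subset hK x hz) (frontier_subset_closure hz)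
      isPreconnected_connectedComponentIn.closure⟩

end Fill

section PropertyS
variable {X : Type*} [PseudoMetricSpace X]

/-- Uniform local connectedness of a subset: nearby points of `K` lie in a common small connected
subset of `K`. -/
def UniformlyLocallyConnected (K : Set X) : Prop :=
  ∀ η > 0, ∃ δ > 0, ∀ x ∈ K, ∀ y ∈ K, dist x y < δ →
    ∃ M ⊆ K, IsPreconnected M ∧ x ∈ M ∧ y ∈ M ∧ M ⊆ ball x η

/-- Sierpiński's property S: `U` is a finite union of arbitrarily small connected sets. -/
def HasPropertyS (U : Set X) : Prop :=
  ∀ η > 0, ∃ 𝒟 : Set (Set X), 𝒟.Finite ∧ U ⊆ ⋃₀ 𝒟 ∧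
    ∀ D ∈ 𝒟, D ⊆ U ∧ IsPreconnected D ∧ ∀ x ∈ D, ∀ y ∈ D, dist x y ≤ η

theorem UniformlyLocallyConnected.image {Y : Type*} [PseudoMetricSpace Y] {K : Set X} {f : X → Y}
    (hf : Isometry f) (hK : UniformlyLocallyConnected K) :
    UniformlyLocallyConnected (f '' K) := by
  intro η hη
  obtain ⟨δ, hδ, hM⟩ := hK η hη
  refine ⟨δ, hδ, ?_⟩
  rintro _ ⟨x, hx, rfl⟩ _ ⟨y, hy, rfl⟩ hxy
  obtain ⟨M, hMK, hMc, hxM, hyM, hMη⟩ := hM x hx y hy (hf.dist_eq x y ▸ hxy)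
  refine ⟨f '' M, image_mono hMK, hMc.image f hf.continuous.continuousOn, mem_image_of_mem f hxM,
    mem_image_of_mem f hyM, ?_⟩
  rw [image_subset_iff, hf.preimage_ball]
  exact hMη

theorem exists_pos_forall_dist_lt_inter_nonempty {ι : Type*} [Finite ι] [CompactSpace X]
    {D : ι → Set X} (hD : ∀ i, IsClosed (D i)) :
    ∃ δ > 0, ∀ i j, ∀ x ∈ D i, ∀ y ∈ D j, dist x y < δ → (D i ∩ D j).Nonempty := by
  suffices ∀ᶠ δ in 𝓝[>] (0 : ℝ), ∀ i j, ∀ x ∈ D i, ∀ y ∈ D j, dist x y < δ →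
      (D i ∩ D j).Nonempty by
    obtain ⟨δ, hδ, hpos⟩ := (this.and self_mem_nhdsWithin).exists
    exact ⟨δ, hpos, hδ⟩
  refine eventually_all.2 fun i ↦ eventually_all.2 fun j ↦ ?_
  by_cases hij : (D i ∩ D j).Nonempty
  · exact .of_forall fun _ _ _ _ _ _ ↦ hij
  obtain ⟨δ, hδ, hdisj⟩ := (disjoint_iff_inter_eq_empty.2
    (not_nonempty_iff_eq_empty.1 hij)).exists_thickenings (hD i).isCompact (hD j)
  filter_upwards [Ioo_mem_nhdsGT hδ] with δ' hδ' x hx y hy hxy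
  refine absurd (self_subset_thickening hδ _ hy) (disjoint_left.1 hdisj ?_)
  exact mem_thickening_iff.2 ⟨x, hx, dist_comm x y ▸ hxy.trans hδ'.2⟩

theorem HasPropertyS.uniformlyLocallyConnected_closure [CompactSpace X] {U : Set X}
    (hU : HasPropertyS U) : UniformlyLocallyConnected (closure U) := by
  intro η hη
  obtain ⟨𝒟, hfin, hcov, h𝒟⟩ := hU (η / 3) (by positivity)
  have := hfin.to_subtype
  have hcov' : closure U ⊆ ⋃ D : 𝒟, closure D := by
    refine closure_minimal (hcov.trans ?_) (isClosed_iUnion_of_finite fun _ ↦ isClosed_closure)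
    exact sUnion_eq_iUnion.trans_subset (iUnion_mono fun _ ↦ subset_closure)
  have hdist : ∀ D : 𝒟, ∀ x ∈ closure (D : Set X), ∀ y ∈ closure (D : Set X),
      dist x y ≤ η / 3 := fun D x hx y hy ↦ isClosed_Iic.closure_subset <|
    map_mem_closure₂ continuous_dist hx hy (u := Iic (η / 3)) (h𝒟 D D.2).2.2
  obtain ⟨δ, hδ, hmeet⟩ := exists_pos_forall_dist_lt_inter_nonempty
    (D := fun D : 𝒟 ↦ closure (D : Set X)) fun _ ↦ isClosed_closure
  refine ⟨δ, hδ, fun x hx y hy hxy ↦ ?_⟩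
  obtain ⟨D, hxD⟩ := mem_iUnion.1 (hcov' hx)
  obtain ⟨D', hyD'⟩ := mem_iUnion.1 (hcov' hy)
  obtain ⟨w, hwD, hwD'⟩ := hmeet D D' x hxD y hyD' hxy
  refine ⟨closure D ∪ closure D',
    union_subset (closure_mono (h𝒟 D D.2).1) (closure_mono (h𝒟 D' D'.2).1),
    (h𝒟 D D.2).2.1.closure.union w hwD hwD' (h𝒟 D' D'.2).2.1.closure, .inl hxD, .inr hyD', ?_⟩
  rintro z (hz | hz) <;> rw [mem_ball]
  · linarith [hdist D z hz x hxD]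
  · linarith [hdist D' z hz w hwD', hdist D w hwD x hxD, dist_triangle z w x]

theorem exists_isOpen_isPreconnected_dist_le [LocallyConnectedSpace X] (x : X) {d : ℝ}
    (hd : 0 < d) : ∃ G : Set X, IsOpen G ∧ IsPreconnected G ∧ x ∈ G ∧
      ∀ y ∈ G, ∀ z ∈ G, dist y z ≤ d := by
  obtain ⟨G, hGball, hGo, hxG, hGc⟩ :=
    (locallyConnectedSpace_iff_subsets_isOpen_isConnected.1 inferInstance) x _
      (ball_mem_nhds x (half_pos hd))
  refine ⟨G, hGo, hGc.isPreconnected, hxG, fun y hy z hz ↦ ?_⟩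
  linarith [mem_ball.1 (hGball hy), mem_ball'.1 (hGball hz), dist_triangle y x z]

theorem exists_finite_cover_isOpen_isPreconnected [CompactSpace X] [LocallyConnectedSpace X]
    {d : ℝ} (hd : 0 < d) : ∃ 𝒢 : Set (Set X), 𝒢.Finite ∧ ⋃₀ 𝒢 = univ ∧
      ∀ G ∈ 𝒢, IsOpen G ∧ IsPreconnected G ∧ ∀ x ∈ G, ∀ y ∈ G, dist x y ≤ d := by
  choose G hGo hGc hxG hGd using fun x : X ↦ exists_isOpen_isPreconnected_dist_le x hd
  obtain ⟨t, ht⟩ := isCompact_univ.elim_finite_subcover G hGo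
    fun x _ ↦ mem_iUnion.2 ⟨x, hxG x⟩
  refine ⟨G '' t, t.finite_toSet.image G, ?_, ?_⟩
  · rw [sUnion_image]
    exact univ_subset_iff.1 ht
  · rintro _ ⟨x, -, rfl⟩
    exact ⟨hGo x, hGc x, hGd x⟩

theorem hasPropertyS_univ [CompactSpace X] [LocallyConnectedSpace X] :
    HasPropertyS (univ : Set X) := fun _ hη ↦
  let ⟨𝒢, hfin, hcov, h𝒢⟩ := exists_finite_cover_isOpen_isPreconnected hη
  ⟨𝒢, hfin, hcov.ge, fun G hG ↦ ⟨subset_univ G, (h𝒢 G hG).2⟩⟩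

theorem uniformlyLocallyConnected_univ [CompactSpace X] [LocallyConnectedSpace X] :
    UniformlyLocallyConnected (univ : Set X) :=
  closure_univ (X := X) ▸ hasPropertyS_univ.uniformlyLocallyConnected_closure

end PropertyS

section ChainNhd
variable {X : Type*} [PseudoMetricSpace X]

/-- The points reached from `p` by a chain of `n` open connected sets, the `k`-th of which has
diameter at most `r / 2 ^ k`. -/
def chainNhdStage (p : X) (r : ℝ) : ℕ → Set X
  | 0 => {p}
  | n + 1 => ⋃₀ {G | IsOpen G ∧ IsPreconnected G ∧ (∀ x ∈ G, ∀ y ∈ G, dist x y ≤ r / 2 ^ n) ∧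
      (G ∩ chainNhdStage p r n).Nonempty}

/-- The points reached from `p` by finite chains of open connected sets with diameters at most
`r, r / 2, r / 4, …`. Since the diameters are summable, this neighbourhood of `p` has property S. -/
def chainNhd (p : X) (r : ℝ) : Set X :=
  ⋃ n, chainNhdStage p r n

theorem chainNhdStage_subset_chainNhd (p : X) (r : ℝ) (n : ℕ) :
    chainNhdStage p r n ⊆ chainNhd p r :=
  subset_iUnion _ n

theorem mem_chainNhd (p : X) (r : ℝ) : p ∈ chainNhd p r :=
  chainNhdStage_subset_chainNhd p r 0 rfl

-- The sizes of the links beyond stage `n` sum to `2 * (r / 2 ^ n)`.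
theorem exists_isPreconnected_inter_chainNhdStage_nonempty (p : X) (r : ℝ) (hr : 0 < r) (k : ℕ) :
    ∀ n, ∀ x ∈ chainNhdStage p r (n + k), ∃ C ⊆ chainNhd p r, IsPreconnected C ∧ x ∈ C ∧
      (C ∩ chainNhdStage p r n).Nonempty ∧ ∀ z ∈ C, dist z x ≤ 2 * (r / 2 ^ n) := by
  induction k with
  | zero =>
    intro n x hx
    refine ⟨{x}, singleton_subset_iff.2 (chainNhdStage_subset_chainNhd p r n hx),
      isPreconnected_singleton, rfl, ⟨x, rfl, hx⟩, ?_⟩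
    rintro z rfl
    rw [dist_self]
    positivity
  | succ k ih =>
    intro n x hx
    obtain ⟨C, hCU, hC, hxC, ⟨y, hyC, G, hG, hyG⟩, hCd⟩ := ih (n + 1) x (by
      rwa [show n + 1 + k = n + (k + 1) by lia])
    obtain ⟨-, hGc, hGd, w, hwG, hw⟩ := id hG
    refine ⟨C ∪ G, union_subset hCU
      ((subset_sUnion_of_mem hG).trans (chainNhdStage_subset_chainNhd p r (n + 1))),
      hC.union y hyC hyG hGc, .inl hxC, ⟨w, .inr hwG, hw⟩, ?_⟩
    have hhalf : 2 * (r / 2 ^ (n + 1)) = r / 2 ^ n := by rw [pow_succ]; field_simp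
    rw [hhalf] at hCd
    rintro z (hz | hz)
    · linarith [hCd z hz, show 0 < r / 2 ^ n by positivity]
    · linarith [hCd y hyC, hGd z hz y hyG, dist_triangle z y x]

variable [LocallyConnectedSpace X] {p : X} {r : ℝ}

theorem monotone_chainNhdStage (hr : 0 < r) : Monotone (chainNhdStage p r) :=
  monotone_nat_of_le_succ fun n x hx ↦ by
    obtain ⟨G, hGo, hGc, hxG, hGd⟩ :=
      exists_isOpen_isPreconnected_dist_le x (show 0 < r / 2 ^ n by positivity)
    exact ⟨G, ⟨hGo, hGc, hGd, x, hxG, hx⟩, hxG⟩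

theorem isOpen_chainNhd (hr : 0 < r) : IsOpen (chainNhd p r) := by
  have hsucc : chainNhd p r = ⋃ n, chainNhdStage p r (n + 1) :=
    ((monotone_chainNhdStage hr).iUnion_nat_add 1).symm
  rw [hsucc]
  exact isOpen_iUnion fun n ↦ isOpen_sUnion fun G hG ↦ hG.1

theorem exists_isPreconnected_inter_stage_nonempty_of_mem_chainNhd (hr : 0 < r) (n : ℕ) {x : X}
    (hx : x ∈ chainNhd p r) : ∃ C ⊆ chainNhd p r, IsPreconnected C ∧ x ∈ C ∧
      (C ∩ chainNhdStage p r n).Nonempty ∧ ∀ z ∈ C, dist z x ≤ 2 * (r / 2 ^ n) := by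
  obtain ⟨m, hm⟩ := mem_iUnion.1 hx
  exact exists_isPreconnected_inter_chainNhdStage_nonempty p r hr m n x
    (monotone_chainNhdStage hr (by lia) hm)

theorem isConnected_chainNhd (hr : 0 < r) : IsConnected (chainNhd p r) := by
  refine ⟨⟨p, mem_chainNhd p r⟩, isPreconnected_of_forall p fun x hx ↦ ?_⟩
  obtain ⟨C, hCU, hC, hxC, ⟨_, hpC, rfl⟩, -⟩ :=
    exists_isPreconnected_inter_stage_nonempty_of_mem_chainNhd hr 0 hx
  exact ⟨C, hCU, hpC, hxC, hC⟩

theorem chainNhd_subset_closedBall (hr : 0 < r) : chainNhd p r ⊆ closedBall p (2 * r) := by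
  intro x hx
  obtain ⟨C, -, -, -, ⟨_, hpC, rfl⟩, hC⟩ :=
    exists_isPreconnected_inter_stage_nonempty_of_mem_chainNhd hr 0 hx
  simpa using! mem_closedBall'.2 (hC _ hpC)

theorem hasPropertyS_chainNhd [CompactSpace X] (hr : 0 < r) : HasPropertyS (chainNhd p r) := by
  intro η hη
  obtain ⟨n, hn⟩ : ∃ n : ℕ, 10 * (r / 2 ^ n) < η := by
    have hlim : Tendsto (fun n : ℕ ↦ 10 * (r / 2 ^ n)) atTop (𝓝 (10 * 0)) := .const_mul 10 <|
      tendsto_const_nhds.div_atTop (tendsto_pow_atTop_atTop_of_one_lt one_lt_two)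
    exact (hlim.eventually_lt_const (by simpa)).exists
  set d := r / 2 ^ n
  have hd : 0 < d := by positivity
  obtain ⟨𝒢, hfin, hcov, h𝒢⟩ := exists_finite_cover_isOpen_isPreconnected (X := X) hd
  set star : Set X → Set X := fun G ↦ ⋃₀ {C | G ⊆ C ∧ C ⊆ chainNhd p r ∧ IsPreconnected C ∧
    ∀ z ∈ C, ∀ g ∈ G, dist z g ≤ 5 * d}
  refine ⟨star '' {G ∈ 𝒢 | G.Nonempty}, (hfin.subset (sep_subset _ _)).image _, fun x hx ↦ ?_, ?_⟩
  · obtain ⟨C, hCU, hC, hxC, ⟨y, hyC, hy⟩, hCd⟩ :=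
      exists_isPreconnected_inter_stage_nonempty_of_mem_chainNhd hr n hx
    obtain ⟨G, hG, hyG⟩ : y ∈ ⋃₀ 𝒢 := hcov ▸ mem_univ y
    obtain ⟨hGo, hGc, hGd⟩ := h𝒢 G hG
    have hGU : G ⊆ chainNhd p r := fun z hz ↦ chainNhdStage_subset_chainNhd p r (n + 1)
      ⟨G, ⟨hGo, hGc, hGd, y, hyG, hy⟩, hz⟩
    refine ⟨star G, mem_image_of_mem star ⟨hG, y, hyG⟩, C ∪ G, ⟨subset_union_right,
      union_subset hCU hGU, hC.union y hyC hyG hGc, ?_⟩, .inl hxC⟩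
    rintro z (hz | hz) g hg
    · linarith [hCd z hz, hCd y hyC, hGd y hyG g hg, dist_triangle4 z x y g, dist_comm x y]
    · linarith [hGd z hz g hg]
  · rintro _ ⟨G, ⟨-, g, hg⟩, rfl⟩
    refine ⟨sUnion_subset fun C hC ↦ hC.2.1,
      isPreconnected_sUnion g _ (fun C hC ↦ hC.1 hg) fun C hC ↦ hC.2.2.1, ?_⟩
    rintro x ⟨C, hC, hx⟩ y ⟨C', hC', hy⟩
    linarith [hC.2.2.2 x hx g hg, hC'.2.2.2 y hy g hg, dist_triangle_right x y g]

end ChainNhd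

section Logarithm
open Complex

theorem div_mem_slitPlane_of_dist_lt {a b : ℂ} (h : dist a b < ‖b‖) : a / b ∈ slitPlane := by
  have hb : b ≠ 0 := norm_pos_iff.1 (dist_nonneg.trans_lt h)
  have hlt : ‖(a - b) / b‖ < 1 := by
    rwa [norm_div, div_lt_one (norm_pos_iff.2 hb), ← dist_eq_norm]
  simpa [sub_div, hb] using mem_slitPlane_of_norm_lt_one hlt

variable {A B : Type*} [TopologicalSpace A] [TopologicalSpace B] {g h : A → ℂ}

/-- The function `g` has a continuous logarithm. -/
def HasContinuousLog (g : A → ℂ) : Prop :=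
  ∃ L : A → ℂ, Continuous L ∧ ∀ a, exp (L a) = g a

theorem HasContinuousLog.comp (hg : HasContinuousLog g) {φ : B → A} (hφ : Continuous φ) :
    HasContinuousLog (g ∘ φ) :=
  let ⟨L, hL, hLg⟩ := hg
  ⟨L ∘ φ, hL.comp hφ, fun b ↦ hLg (φ b)⟩

theorem HasContinuousLog.mul (hg : HasContinuousLog g) (hh : HasContinuousLog h) :
    HasContinuousLog (fun a ↦ g a * h a) :=
  let ⟨L, hL, hLg⟩ := hg
  let ⟨M, hM, hMh⟩ := hh
  ⟨fun a ↦ L a + M a, hL.add hM, fun a ↦ by rw [exp_add, hLg, hMh]⟩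

theorem HasContinuousLog.inv (hg : HasContinuousLog g) : HasContinuousLog (fun a ↦ (g a)⁻¹) :=
  let ⟨L, hL, hLg⟩ := hg
  ⟨fun a ↦ -L a, hL.neg, fun a ↦ by rw [exp_neg, hLg]⟩

theorem HasContinuousLog.ne_zero (hg : HasContinuousLog g) (a : A) : g a ≠ 0 :=
  let ⟨L, _, hLg⟩ := hg
  hLg a ▸ exp_ne_zero (L a)

theorem HasContinuousLog.exists_continuousOn {s : Set A}
    (h : HasContinuousLog (s.domRestrict g)) :
    ∃ ℓ : A → ℂ, ContinuousOn ℓ s ∧ ∀ a ∈ s, exp (ℓ a) = g a := by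
  obtain ⟨L, hL, hLg⟩ := h
  have hext : ∀ a : s, Function.extend Subtype.val L 0 a = L a :=
    Subtype.val_injective.extend_apply L 0
  refine ⟨Function.extend Subtype.val L 0, continuousOn_iff_continuous_domRestrict.2 ?_,
    fun a ha ↦ (congrArg exp (hext ⟨a, ha⟩)).trans (hLg ⟨a, ha⟩)⟩
  exact hL.congr fun a ↦ (hext a).symm

theorem hasContinuousLog_const {c : ℂ} (hc : c ≠ 0) : HasContinuousLog (fun _ : A ↦ c) :=
  ⟨fun _ ↦ log c, continuous_const, fun _ ↦ exp_log hc⟩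

theorem hasContinuousLog_of_mem_slitPlane (hg : Continuous g) (hslit : ∀ a, g a ∈ slitPlane) :
    HasContinuousLog g :=
  ⟨fun a ↦ log (g a), hg.clog hslit, fun a ↦ exp_log (slitPlane_ne_zero (hslit a))⟩

theorem HasContinuousLog.of_norm_sub_lt (hg : HasContinuousLog g) (hgc : Continuous g)
    (hhc : Continuous h) (hgh : ∀ a, ‖h a - g a‖ < ‖g a‖) : HasContinuousLog h := by
  have hslit : ∀ a, h a / g a ∈ slitPlane := fun a ↦
    div_mem_slitPlane_of_dist_lt ((dist_eq_norm _ _).trans_lt (hgh a))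
  convert hg.mul (hasContinuousLog_of_mem_slitPlane (hhc.div hgc hg.ne_zero) hslit) with a
  rw [Pi.div_apply, mul_div_cancel₀ _ (hg.ne_zero a)]

theorem hasContinuousLog_of_open_cover {ι : Type*} {V : ι → Set A} (hV : ∀ i, IsOpen (V i))
    (hcover : ∀ a, ∃ i, a ∈ V i) {ℓ : ι → A → ℂ} (hℓ : ∀ i, ContinuousOn (ℓ i) (V i))
    (hexp : ∀ i, ∀ a ∈ V i, exp (ℓ i a) = g a)
    (hagree : ∀ i j, ∀ a ∈ V i ∩ V j, ℓ i a = ℓ j a) : HasContinuousLog g := by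
  choose i hi using hcover
  refine ⟨fun a ↦ ℓ (i a) a, continuous_iff_continuousAt.2 fun a ↦ ?_, fun a ↦ hexp _ a (hi a)⟩
  have hVa : V (i a) ∈ 𝓝 a := (hV _).mem_nhds (hi a)
  exact ((hℓ _).continuousAt hVa).congr <| Filter.mem_of_superset hVa fun b hb ↦
    hagree _ _ b ⟨hb, hi b⟩

theorem hasContinuousLog_of_simplyConnectedSpace [SimplyConnectedSpace A]
    [LocallyPathConnectedSpace A] (hg : Continuous g) (h0 : ∀ a, g a ≠ 0) :
    HasContinuousLog g := by
  obtain ⟨a₀⟩ : Nonempty A := inferInstance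
  obtain ⟨F, ⟨-, hF⟩, -⟩ := isCoveringMap_exp.existsUnique_continuousMap_lifts
    (⟨fun a ↦ ⟨g a, h0 a⟩, by fun_prop⟩ : C(A, {z : ℂ // z ≠ 0})) a₀ (log (g a₀))
    (Subtype.ext (exp_log (h0 a₀)))
  exact ⟨F, F.continuous, fun a ↦ congrArg Subtype.val (congrFun hF a)⟩

theorem eqOn_of_exp_eqOn {s : Set A} (hs : IsPreconnected s) {F G : A → ℂ}
    (hF : ContinuousOn F s) (hG : ContinuousOn G s) (hexp : ∀ x ∈ s, exp (F x) = exp (G x))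
    {a : A} (ha : a ∈ s) (hFG : F a = G a) : EqOn F G s :=
  isCoveringMap_exp.eqOn_of_comp_eqOn hs hF hG (fun x hx ↦ Subtype.ext (hexp x hx)) ha hFG

end Logarithm

section PlaneSets
open Complex

theorem exists_hasContinuousLog_sub {Y : Set ℂ} (hY : IsBounded Y) :
    ∃ z ∉ Y, HasContinuousLog (fun y : Y ↦ (y : ℂ) - z) := by
  obtain ⟨R, hR⟩ := hY.exists_norm_le
  have hre : ∀ y ∈ Y, 0 < ((R + 1 : ℝ) - y : ℂ).re := fun y hy ↦ by
    have := (re_le_norm y).trans (hR y hy)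
    simp only [sub_re, ofReal_re]
    linarith
  refine ⟨(R + 1 : ℝ), fun h ↦ by simpa using hre _ h, ?_⟩
  convert (hasContinuousLog_const (A := Y) (neg_ne_zero.2 one_ne_zero)).mul
    (hasContinuousLog_of_mem_slitPlane (g := fun y : Y ↦ ((R + 1 : ℝ) - y : ℂ)) (by fun_prop)
      fun y ↦ mem_slitPlane_iff.2 (.inl (hre y y.2))) using 2
  ring

theorem hasContinuousLog_sub_of_isPreconnected_compl {Y : Set ℂ} (hY : IsCompact Y)
    (hYc : IsPreconnected Yᶜ) {z : ℂ} (hz : z ∉ Y) :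
    HasContinuousLog (fun y : Y ↦ (y : ℂ) - z) := by
  obtain ⟨z₀, hz₀, hlog⟩ := exists_hasContinuousLog_sub hY.isBounded
  have move : ∀ a b : ℂ, (∀ y ∈ Y, ‖a - b‖ < ‖y - a‖) →
      HasContinuousLog (fun y : Y ↦ (y : ℂ) - a) →
        HasContinuousLog (fun y : Y ↦ (y : ℂ) - b) := fun a b hab ha ↦
    ha.of_norm_sub_lt (by fun_prop) (by fun_prop) fun y ↦ by
      simpa only [sub_sub_sub_cancel_left] using hab y y.2
  refine (hYc.induction₂ (fun a b ↦ HasContinuousLog (fun y : Y ↦ (y : ℂ) - a) ↔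
    HasContinuousLog (fun y : Y ↦ (y : ℂ) - b)) (fun a ha ↦ ?_) (fun _ _ _ _ _ _ ↦ Iff.trans)
    (fun _ _ _ _ ↦ Iff.symm) hz₀ hz).1 hlog
  obtain ⟨ε, hε, hball⟩ := Metric.isOpen_iff.1 hY.isClosed.isOpen_compl a ha
  have hfar : ∀ y ∈ Y, ε ≤ ‖y - a‖ := fun y hy ↦
    le_of_not_gt fun hlt ↦ hball (mem_ball_iff_norm.2 hlt) hy
  filter_upwards [mem_nhdsWithin_of_mem_nhds (ball_mem_nhds a (half_pos hε))] with b hb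
  rw [mem_ball_iff_norm] at hb
  constructor <;> apply move <;> intro y hy
  · rw [norm_sub_rev]
    linarith [hfar y hy]
  · linarith [hfar y hy, norm_sub_le_norm_sub_add_norm_sub y b a]

theorem exists_eq_zero_of_isBounded_ne_sub {g : ℂ → ℂ} (hg : Continuous g) {u : ℂ}
    (hb : IsBounded {z | g z ≠ z - u}) : ∃ z, g z = 0 := by
  by_contra! h0
  obtain ⟨G, hG, hGg⟩ := hasContinuousLog_of_simplyConnectedSpace hg h0
  obtain ⟨R, hR0, hR⟩ := hb.subset_ball_lt 0 u
  have hcircle : ∀ t : ℝ, exp (G (u + R * exp (t * I))) = R * exp (t * I) := fun t ↦ by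
    by_contra hne
    rw [hGg] at hne
    have hmem : u + R * exp (t * I) ∈ ball u R :=
      hR fun h ↦ hne (h.trans (add_sub_cancel_left _ _))
    simp [norm_exp_ofReal_mul_I, abs_of_pos hR0] at hmem
  have hconst := eqOn_of_exp_eqOn (isPreconnected_univ (α := ℝ))
    (F := fun t ↦ G (u + R * exp (t * I)) - t * I) (G := fun _ ↦ G (u + R * exp ((0 : ℝ) * I)))
    (by fun_prop) (by fun_prop)
    (fun t _ ↦ by
      rw [exp_sub, hcircle, hcircle, mul_div_assoc, div_self (exp_ne_zero _)]
      simp) (mem_univ 0) (by simp) (mem_univ (2 * Real.pi))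
  simp [Real.pi_ne_zero] at hconst

-- With `M` a Tietze extension of the logarithm, `g * exp (-M)` on `O` and `z - u` outside of `O`
-- fit together to a continuous function on the plane.
theorem exists_eq_zero_of_hasContinuousLog_div_sub {O A : Set ℂ} {u : ℂ} (hu : u ∈ O)
    (hO : IsBounded O) (hA : IsClosed A) (hfr : frontier O ⊆ A) {g : ℂ → ℂ} (hg : Continuous g)
    (hlog : HasContinuousLog (fun z : A ↦ g z / (z - u))) : ∃ z ∈ O, g z = 0 := by
  classical
  obtain ⟨L, hL, hLg⟩ := hlog
  obtain ⟨M, hM⟩ := ContinuousMap.exists_restrict_eq hA ⟨L, hL⟩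
  have hMg : ∀ z ∈ A, exp (M z) = g z / (z - u) := fun z hz ↦ by
    refine Eq.trans ?_ (hLg ⟨z, hz⟩)
    exact congrArg exp (DFunLike.congr_fun hM ⟨z, hz⟩)
  have hglue : ∀ z ∈ frontier O, g z * exp (-M z) = z - u := fun z hz ↦ by
    have hdiv : g z / (z - u) ≠ 0 := hMg z (hfr hz) ▸ exp_ne_zero _
    obtain ⟨hgz, hzu⟩ := div_ne_zero_iff.1 hdiv
    rw [exp_neg, hMg z (hfr hz)]
    field_simp
  obtain ⟨z, hz⟩ := exists_eq_zero_of_isBounded_ne_sub (u := u)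
    (g := fun z ↦ if z ∈ O then g z * exp (-M z) else z - u)
    (continuous_if hglue (by fun_prop) (by fun_prop))
    (hO.subset fun z hz ↦ by by_contra h; simp [h] at hz)
  by_cases hzO : z ∈ O
  · exact ⟨z, hzO, by simpa [hzO] using hz⟩
  · rw [if_neg hzO, sub_eq_zero] at hz
    exact absurd (hz ▸ hu) hzO

theorem not_hasContinuousLog_sub_of_frontier_subset {O A : Set ℂ} {u : ℂ} (hu : u ∈ O)
    (hO : IsBounded O) (hA : IsClosed A) (hfr : frontier O ⊆ A) :
    ¬ HasContinuousLog (fun z : A ↦ (z : ℂ) - u) := fun hlog ↦ by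
  obtain ⟨_, -, h⟩ := exists_eq_zero_of_hasContinuousLog_div_sub hu hO hA hfr
    (continuous_const (y := (1 : ℂ))) (by simpa only [one_div] using hlog.inv)
  exact one_ne_zero h

end PlaneSets

section EssentialLoop
open Complex

/-- The set `S` contains a loop `t ↦ u + exp (γ t)` which is not null-homotopic in the complement of
`u`. The loop is encoded by the lift `γ`, whose end points differ by a nonzero multiple of `2πi`. -/
def HasEssentialLoop (u : ℂ) (S : Set ℂ) : Prop :=
  ∃ (a b : ℂ) (γ : Path a b), a ≠ b ∧ exp a = exp b ∧ ∀ t, u + exp (γ t) ∈ S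

-- Lifts of two paths with common end points to the logarithm combine to a lift of a loop.
theorem hasContinuousLog_sub_of_not_hasEssentialLoop {A : Type*} [TopologicalSpace A]
    [PathConnectedSpace A] [LocallyPathConnectedSpace A] {g : A → ℂ} (hg : Continuous g) {u : ℂ}
    (hu : ∀ a, g a ≠ u) (hno : ¬ HasEssentialLoop u (range g)) :
    HasContinuousLog (fun a ↦ g a - u) := by
  obtain ⟨a₀⟩ : Nonempty A := inferInstance
  let f : C(A, {z : ℂ // z ≠ 0}) := ⟨fun a ↦ ⟨g a - u, sub_ne_zero.2 (hu a)⟩, by fun_prop⟩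
  have hexp₀ : (⟨exp (log (g a₀ - u)), exp_ne_zero _⟩ : {z : ℂ // z ≠ 0}) = f a₀ :=
    Subtype.ext (exp_log (sub_ne_zero.2 (hu a₀)))
  obtain ⟨F, ⟨-, hF⟩, -⟩ := isCoveringMap_exp.isLocalHomeomorph.existsUnique_continuousMap_lifts
    f a₀ (log (g a₀ - u)) hexp₀
    (fun γ hγ ↦ by
      obtain ⟨Γ, hΓ0, hΓ⟩ := isCoveringMap_exp.exists_path_lifts (f.comp γ) (log (g a₀ - u))
        (by rw [hexp₀, ← hγ]; rfl)
      exact ⟨Γ, hΓ, hΓ0⟩)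
    (fun γ γ' Γ Γ' _ _ hΓ hΓ' hlift hlift' hend ↦ by
      have hexp : ∀ t, exp (Γ t) = g (γ t) - u := fun t ↦ congrArg Subtype.val (congrFun hlift t)
      have hexp' : ∀ t, exp (Γ' t) = g (γ' t) - u := fun t ↦
        congrArg Subtype.val (congrFun hlift' t)
      by_contra hne
      refine hno ⟨_, _, (Path.mk Γ hΓ rfl).symm.trans (Path.mk Γ' hΓ' rfl), hne,
        ((hexp 1).trans (by rw [hend])).trans (hexp' 1).symm, fun t ↦ ?_⟩
      rw [Path.trans_apply]
      split_ifs
      · exact ⟨γ _, ((congrArg (u + ·) (hexp _)).trans (add_sub_cancel _ _)).symm⟩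
      · exact ⟨γ' _, ((congrArg (u + ·) (hexp' _)).trans (add_sub_cancel _ _)).symm⟩)
  exact ⟨F, F.continuous, fun a ↦ congrArg Subtype.val (congrFun hF a)⟩

end EssentialLoop

section FixedPointProperty
open Complex
variable {Y K : Set ℂ}

-- The logarithm is normalized to vanish at `u`; this makes it unique, as `Y` is connected.
theorem hasContinuousLog_sub_div_sub (hY : IsCompact Y) (hYconn : IsPreconnected Y)
    (hYc : IsPreconnected Yᶜ) {u : ℂ} (hu : u ∈ Y) :
    HasContinuousLog (fun p : ↥Yᶜ × Y ↦ ((p.1 : ℂ) - p.2) / (p.1 - u)) := by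
  have : PreconnectedSpace Y := isPreconnected_iff_preconnectedSpace.1 hYconn
  have hne : ∀ z : ↥Yᶜ, ∀ y ∈ Y, (z : ℂ) - y ≠ 0 := fun z y hy h ↦ z.2 (sub_eq_zero.1 h ▸ hy)
  choose L hL hLexp using fun c : ↥Yᶜ ↦ (hasContinuousLog_sub_of_isPreconnected_compl hY hYc c.2)
  let V (c : ↥Yᶜ) : Set (↥Yᶜ × Y) := {p | dist p.1 c < infDist (c : ℂ) Y}
  let ℓ (c : ↥Yᶜ) (p : ↥Yᶜ × Y) : ℂ := L c p.2 - L c ⟨u, hu⟩ +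
    (log ((p.1 - p.2) / (c - p.2)) - log ((p.1 - u) / (c - u)))
  have hslit : ∀ c, ∀ p ∈ V c, ∀ y ∈ Y, ((p.1 : ℂ) - y) / (c - y) ∈ slitPlane :=
    fun c p hp y hy ↦ div_mem_slitPlane_of_dist_lt <| by
      rw [dist_sub_right, ← dist_eq_norm]
      exact hp.trans_le (infDist_le_dist_of_mem hy)
  have hℓ : ∀ c, ContinuousOn (ℓ c) (V c) := fun c ↦
    .add (by fun_prop) <| .sub
      (.clog (.div (by fun_prop) (by fun_prop) fun p _ ↦ hne c _ p.2.2)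
        fun p hp ↦ hslit c p hp _ p.2.2)
      (.clog (by fun_prop) fun p hp ↦ hslit c p hp u hu)
  have hexp : ∀ c, ∀ p ∈ V c, exp (ℓ c p) = (p.1 - p.2) / (p.1 - u) := fun c p hp ↦ by
    have hcp := hne c _ p.2.2
    have hcu := hne c u hu
    have hpu := hne p.1 u hu
    simp only [ℓ, exp_add, exp_sub, hLexp, exp_log (slitPlane_ne_zero (hslit c p hp _ p.2.2)),
      exp_log (slitPlane_ne_zero (hslit c p hp u hu)), ← neg_sub (c : ℂ)]
    field_simp
  refine hasContinuousLog_of_open_cover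
    (fun c ↦ isOpen_lt (by fun_prop) continuous_const) (fun p ↦ ⟨p.1, ?_⟩) hℓ hexp
    fun c d ⟨z, y⟩ hz ↦ ?_
  · simpa using (hY.isClosed.notMem_iff_infDist_pos ⟨u, hu⟩).1 p.1.2
  · have hslice : ∀ e, z ∈ Prod.fst '' V e → Continuous fun y ↦ ℓ e (z, y) := fun e ↦ by
      rintro ⟨p, hp, rfl⟩
      exact (hℓ e).comp_continuous (by fun_prop) fun _ ↦ hp
    exact eqOn_of_exp_eqOn isPreconnected_univ (hslice c ⟨_, hz.1, rfl⟩).continuousOn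
      (hslice d ⟨_, hz.2, rfl⟩).continuousOn
      (fun x _ ↦ (hexp c (z, x) hz.1).trans (hexp d (z, x) hz.2).symm)
      (mem_univ ⟨u, hu⟩) (by simp [ℓ]) (mem_univ y)

theorem exists_pos_forall_dist_lt_dist_apply {E : Type*} [MetricSpace E] {s : Set E}
    (hs : IsCompact s) {F : E → E} (hF : Continuous F) (hFs : ∀ x ∈ s, F x ≠ x) :
    ∃ ρ > 0, ∀ x ∈ s, ∀ z, dist z x < ρ → dist (F z) (F x) < dist z (F x) := by
  have hU : IsOpen {p : E × E | dist (F p.2) (F p.1) < dist p.2 (F p.1)} :=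
    isOpen_lt (by fun_prop) (by fun_prop)
  have hdiag : IsCompact ((fun x ↦ (x, x)) '' s) := hs.image (by fun_prop)
  obtain ⟨ρ, hρ, hsub⟩ := hdiag.exists_thickening_subset_open hU
    (image_subset_iff.2 fun x hx ↦ by simpa using (hFs x hx).symm)
  refine ⟨ρ, hρ, fun x hx z hz ↦ @hsub (x, z) (mem_thickening_iff.2 ⟨_, ⟨x, hx, rfl⟩, ?_⟩)⟩
  simpa [Prod.dist_eq, hρ] using hz

theorem frontier_thickening_subset_compl_inter_thickening {E : Type*} [NormedAddCommGroup E]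
    [NormedSpace ℝ E] {s t : Set E} (hst : frontier s ⊆ t) {r ε : ℝ} (hr : 0 < r) (hrε : r < ε) :
    frontier (thickening r s) ⊆ sᶜ ∩ thickening ε t := fun z hz ↦ by
  have hzr : infEDist z s = ENNReal.ofReal r := frontier_thickening_subset s hz
  have hzs : z ∉ s := fun h ↦ by simp [infEDist_zero_of_mem h, hr.not_ge] at hzr
  obtain ⟨y, hy, hzy⟩ := mem_thickening_iff.1 <| mem_thickening_iff_infEDist_lt.2 <|
    hzr.trans_lt ((ENNReal.ofReal_lt_ofReal_iff (hr.trans hrε)).2 hrε)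
  obtain ⟨c, hc, hcs⟩ := nonempty_inter_frontier_of_isPreconnected
    (convex_segment z y).isPreconnected ⟨y, right_mem_segment ℝ z y, hy⟩
    fun h ↦ hzs (h (left_mem_segment ℝ z y))
  refine ⟨hzs, mem_thickening_iff.2 ⟨c, hst hcs, lt_of_le_of_lt ?_ hzy⟩⟩
  simpa only [dist_eq_norm'] using norm_sub_le_of_mem_segment hc

section FixedPoint
variable {F : ℂ → ℂ} {u : ℂ} {ρ : ℝ}

theorem hasContinuousLog_sub_apply_div_sub (hY : IsCompact Y) (hYconn : IsPreconnected Y)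
    (hYc : IsPreconnected Yᶜ) (hF : Continuous F) (hmap : MapsTo F Y Y) (hu : u ∈ Y)
    (hFρ : ∀ y ∈ Y, ∀ z, dist z y < ρ → dist (F z) (F y) < dist z (F y)) :
    HasContinuousLog ({p : ℂ × ℂ | p.1 ∉ Y ∧ p.2 ∈ Y ∧ dist p.1 p.2 < ρ}.domRestrict
      fun p ↦ (p.1 - F p.1) / (p.1 - u)) := by
  set W := {p : ℂ × ℂ | p.1 ∉ Y ∧ p.2 ∈ Y ∧ dist p.1 p.2 < ρ}
  have hne : ∀ p : W, p.1.1 - F p.1.2 ≠ 0 := fun p h ↦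
    p.2.1 (sub_eq_zero.1 h ▸ hmap p.2.2.1)
  have hbase : HasContinuousLog (fun p : W ↦ (p.1.1 - F p.1.2) / (p.1.1 - u)) :=
    (hasContinuousLog_sub_div_sub hY hYconn hYc hu).comp
      (φ := fun p : W ↦ (⟨p.1.1, p.2.1⟩, ⟨F p.1.2, hmap p.2.2.1⟩)) (by fun_prop)
  have hnear : HasContinuousLog (fun p : W ↦ (p.1.1 - F p.1.1) / (p.1.1 - F p.1.2)) := by
    refine hasContinuousLog_of_mem_slitPlane (.div (by fun_prop) (by fun_prop) hne) fun p ↦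
      div_mem_slitPlane_of_dist_lt ?_
    rw [dist_sub_left, ← dist_eq_norm]
    exact hFρ _ p.2.2.1 _ p.2.2.2
  convert hbase.mul hnear with p
  have := hne p
  rw [domRestrict_apply]
  field_simp

-- For each `y ∈ K` near `z` the previous lemma provides a logarithm. It does not depend on `y`,
-- because any two choices are joined by a small connected subset of `K`.
theorem exists_hasContinuousLog_sub_apply_div_sub (hY : IsCompact Y) (hYconn : IsPreconnected Y)
    (hYc : IsPreconnected Yᶜ) (hKY : K ⊆ Y) (hK : UniformlyLocallyConnected K)
    (hF : Continuous F) (hmap : MapsTo F Y Y) (hu : u ∈ Y) (hρ : 0 < ρ)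
    (hFρ : ∀ y ∈ Y, ∀ z, dist z y < ρ → dist (F z) (F y) < dist z (F y)) :
    ∃ ε > 0, HasContinuousLog ((Yᶜ ∩ thickening ε K).domRestrict
      fun z ↦ (z - F z) / (z - u)) := by
  obtain ⟨ℓ, hℓ, hexp⟩ :=
    (hasContinuousLog_sub_apply_div_sub hY hYconn hYc hF hmap hu hFρ).exists_continuousOn
  obtain ⟨δ, hδ, hKδ⟩ := hK (ρ / 2) (half_pos hρ)
  refine ⟨min (ρ / 2) (δ / 2), by positivity, ?_⟩
  set ε := min (ρ / 2) (δ / 2)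
  have hερ : ε ≤ ρ / 2 := min_le_left _ _
  have hεδ : ε ≤ δ / 2 := min_le_right _ _
  let D := ↥(Yᶜ ∩ thickening ε K)
  let V (y : K) : Set D := {z | dist (z : ℂ) y < ε}
  have hVW : ∀ y, ∀ z ∈ V y, (z : ℂ) ∉ Y ∧ (y : ℂ) ∈ Y ∧ dist (z : ℂ) y < ρ := fun y z hz ↦
    ⟨z.2.1, hKY y.2, by linarith [hz.out]⟩
  refine hasContinuousLog_of_open_cover (fun y ↦ isOpen_lt (by fun_prop) continuous_const)
    (fun z ↦ ?_) (ℓ := fun y z ↦ ℓ (z, y)) (V := V)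
    (fun y ↦ hℓ.comp (by fun_prop) (hVW y)) (fun y z hz ↦ hexp (z, y) (hVW y z hz))
    fun y y' z ⟨hzy, hzy'⟩ ↦ ?_
  · obtain ⟨y, hy, hzy⟩ := mem_thickening_iff.1 z.2.2
    exact ⟨⟨y, hy⟩, hzy⟩
  · obtain ⟨M, hMK, hM, hyM, hyM', hMρ⟩ := hKδ y y.2 y' y'.2 <|
      (dist_triangle_left (y : ℂ) y' z).trans_lt (by linarith [hzy.out, hzy'.out])
    have hMW : ∀ m ∈ M, (z : ℂ) ∉ Y ∧ m ∈ Y ∧ dist (z : ℂ) m < ρ := fun m hm ↦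
      ⟨z.2.1, hKY (hMK hm), (dist_triangle_right (z : ℂ) m y).trans_lt
        (by linarith [hzy.out, mem_ball.1 (hMρ hm)])⟩
    exact (eqOn_of_exp_eqOn hM (F := fun m ↦ ℓ (z, m)) (G := fun _ ↦ ℓ (z, y))
      (hℓ.comp (by fun_prop) hMW) continuousOn_const
      (fun m hm ↦ (hexp (z, m) (hMW m hm)).trans (hexp (z, y) (hVW y z hzy)).symm) hyM rfl
      hyM').symm

theorem hasFPP_of_uniformlyLocallyConnected (hY : IsCompact Y) (hYconn : IsConnected Y)
    (hYc : IsPreconnected Yᶜ) (hKY : K ⊆ Y) (hfr : frontier Y ⊆ K)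
    (hK : UniformlyLocallyConnected K) : HasFPP Y := by
  refine hasFPP_of_forall_continuousOn fun f hf hmap ↦ ?_
  obtain ⟨F, hF⟩ := ContinuousMap.exists_restrict_eq hY.isClosed
    ⟨Y.domRestrict f, continuousOn_iff_continuous_domRestrict.1 hf⟩
  have hFf : EqOn F f Y := fun y hy ↦ DFunLike.congr_fun hF ⟨y, hy⟩
  by_contra! hne
  obtain ⟨u, hu⟩ := hYconn.nonempty
  obtain ⟨ρ, hρ, hFρ⟩ := exists_pos_forall_dist_lt_dist_apply hY F.continuous
    fun y hy ↦ hFf hy ▸ hne y hy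
  obtain ⟨ε, hε, hlog⟩ := exists_hasContinuousLog_sub_apply_div_sub hY hYconn.isPreconnected hYc
    hKY hK F.continuous (hmap.congr hFf.symm) hu hρ hFρ
  obtain ⟨r, hr, hrlt⟩ := exists_between (lt_min hε hρ)
  have hfrD := frontier_thickening_subset_compl_inter_thickening hfr hr
    (hrlt.trans_le (min_le_left _ _))
  obtain ⟨z, hz, hzF⟩ := exists_eq_zero_of_hasContinuousLog_div_sub (O := thickening r Y)
    (self_subset_thickening hr Y hu) hY.isBounded.thickening isClosed_frontier Subset.rfl
    (g := fun z ↦ z - F z) (by fun_prop) (hlog.comp (continuous_inclusion hfrD))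
  obtain ⟨y, hy, hzy⟩ := mem_thickening_iff.1 hz
  have := hFρ y hy z (hzy.trans (hrlt.trans_le (min_le_right _ _)))
  rw [← sub_eq_zero.1 hzF] at this
  exact this.false

end FixedPoint

end FixedPointProperty

section Jumps
variable {X : Type*} [PseudoMetricSpace X] {δ ε : ℝ}

/-- At each point of `s` the function `f` jumps by less than `δ`. Paths are constructed as uniform
limits of functions with smaller and smaller jumps. -/
def JumpsLT (δ : ℝ) (f : ℝ → X) (s : Set ℝ) : Prop :=
  ∀ t ∈ s, ∀ᶠ r in 𝓝[s] t, dist (f r) (f t) < δ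

theorem jumpsLT_ite (hδ : 0 < δ) {x y : X} (hxy : dist x y < δ) (p : ℝ → Prop) [DecidablePred p]
    (s : Set ℝ) : JumpsLT δ (fun t ↦ if p t then x else y) s := fun t _ ↦ .of_forall fun r ↦ by
  have hyx := dist_comm x y ▸ hxy
  dsimp only
  split_ifs <;> simpa

theorem JumpsLT.glue {f g : ℝ → X} {a b c : ℝ} (hf : JumpsLT δ f (Icc a b))
    (hg : JumpsLT δ g (Icc b c)) (hfg : f b = g b) :
    JumpsLT δ (fun t ↦ if t ≤ b then f t else g t) (Icc a c) := fun t ht ↦ by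
  simp only [JumpsLT, eventually_nhdsWithin_iff] at hf hg ⊢
  rcases lt_trichotomy t b with h | rfl | h
  · filter_upwards [hf t ⟨ht.1, h.le⟩, Iio_mem_nhds h] with r hr hrb hrs
    simpa only [if_pos h.le, if_pos hrb.out.le] using hr ⟨hrs.1, hrb.out.le⟩
  · filter_upwards [hf t ⟨ht.1, le_rfl⟩, hg t ⟨le_rfl, ht.2⟩] with r hr hr' hrs
    rw [if_pos le_rfl]
    split_ifs with hrt
    · exact hr ⟨hrs.1, hrt⟩
    · exact hfg ▸ hr' ⟨(not_le.1 hrt).le, hrs.2⟩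
  · filter_upwards [hg t ⟨h.le, ht.2⟩, Ioi_mem_nhds h] with r hr hrb hrs
    simpa only [if_neg h.not_ge, if_neg hrb.out.not_ge] using hr ⟨hrb.out.le, hrs.2⟩

theorem exists_jumpsLT_of_isPreconnected {M : Set X} (hM : IsPreconnected M) {x y : X} (hx : x ∈ M)
    (hy : y ∈ M) (hδ : 0 < δ) {a b : ℝ} (hab : a < b) :
    ∃ g : ℝ → X, g a = x ∧ g b = y ∧ (∀ t, g t ∈ M) ∧ JumpsLT δ g (Icc a b) := by
  let R (x y : X) : Prop := ∀ a b : ℝ, a < b →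
    ∃ g : ℝ → X, g a = x ∧ g b = y ∧ (∀ t, g t ∈ M) ∧ JumpsLT δ g (Icc a b)
  have hstep : ∀ x ∈ M, ∀ y ∈ M, dist x y < δ → R x y := fun x hx y hy hxy a b hab ↦
    ⟨fun t ↦ if t ≤ a then x else y, if_pos le_rfl, if_neg hab.not_ge,
      fun t ↦ by dsimp only; split_ifs <;> assumption, jumpsLT_ite hδ hxy _ _⟩
  refine hM.induction₂' R (fun x hx ↦ ?_) (fun x y z _ _ _ hxy hyz a b hab ↦ ?_) hx hy a b hab
  · filter_upwards [self_mem_nhdsWithin, mem_nhdsWithin_of_mem_nhds (ball_mem_nhds x hδ)]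
      with y hy hyx
    exact ⟨hstep x hx y hy (mem_ball'.1 hyx), hstep y hy x hx hyx⟩
  · obtain ⟨c, hac, hcb⟩ := exists_between hab
    obtain ⟨f, hfa, hfc, hfM, hf⟩ := hxy a c hac
    obtain ⟨g, hgc, hgb, hgM, hg⟩ := hyz c b hcb
    exact ⟨fun t ↦ if t ≤ c then f t else g t, (if_pos hac.le).trans hfa,
      (if_neg hcb.not_ge).trans hgb, fun t ↦ by dsimp only; split_ifs <;> apply_assumption,
      hf.glue hg (hfc.trans hgc.symm)⟩

theorem exists_jumpsLT_dist_lt_of_forall_dist_lt {δ' a b : ℝ} (hab : a ≤ b) (hε : 0 < ε)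
    (hX : ∀ x y : X, dist x y < δ → ∃ M, IsPreconnected M ∧ x ∈ M ∧ y ∈ M ∧ M ⊆ ball x ε)
    (hδ' : 0 < δ') {f : ℝ → X} {z : X} (hz : ∀ t ∈ Icc a b, dist (f t) z < δ / 2) :
    ∃ g : ℝ → X, g a = f a ∧ g b = f b ∧ JumpsLT δ' g (Icc a b) ∧
      ∀ t ∈ Icc a b, dist (f t) (g t) < ε + δ := by
  have hdist : ∀ t ∈ Icc a b, dist (f a) (f t) < δ := fun t ht ↦ by
    linarith [dist_triangle_right (f a) (f t) z, hz a ⟨le_rfl, hab⟩, hz t ht]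
  rcases hab.eq_or_lt with rfl | hab'
  · refine ⟨fun _ ↦ f a, rfl, rfl, fun _ _ ↦ .of_forall fun _ ↦ by simpa, fun t ht ↦ ?_⟩
    linarith [hdist t ht, dist_comm (f a) (f t)]
  obtain ⟨M, hMc, haM, hbM, hM⟩ := hX _ _ (hdist b ⟨hab, le_rfl⟩)
  obtain ⟨g, hga, hgb, hgM, hg⟩ := exists_jumpsLT_of_isPreconnected hMc haM hbM hδ' hab'
  refine ⟨g, hga, hgb, hg, fun t ht ↦ ?_⟩
  linarith [dist_triangle_left (f t) (g t) (f a), hdist t ht, mem_ball'.1 (hM (hgM t))]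

theorem exists_jumpsLT_dist_lt {δ' a b : ℝ} (hab : a ≤ b) (hε : 0 < ε)
    (hX : ∀ x y : X, dist x y < δ → ∃ M, IsPreconnected M ∧ x ∈ M ∧ y ∈ M ∧ M ⊆ ball x ε)
    (hδ' : 0 < δ') {f : ℝ → X} (hf : JumpsLT (δ / 2) f (Icc a b)) :
    ∃ g : ℝ → X, g a = f a ∧ g b = f b ∧ JumpsLT δ' g (Icc a b) ∧
      ∀ t ∈ Icc a b, dist (f t) (g t) < ε + δ := by
  let Good (c d : ℝ) : Prop := ∃ g : ℝ → X, g c = f c ∧ g d = f d ∧ JumpsLT δ' g (Icc c d) ∧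
      ∀ t ∈ Icc c d, dist (f t) (g t) < ε + δ
  have hglue : ∀ c d, a ≤ c → c ≤ d → Good a c → Good c d → Good a d := by
    rintro c d hac hcd ⟨g, hga, hgc, hg, hfg⟩ ⟨k, hkc, hkd, hk, hfk⟩
    refine ⟨fun t ↦ if t ≤ c then g t else k t, (if_pos hac).trans hga, ?_,
      hg.glue hk (hgc.trans hkc.symm), fun t ht ↦ ?_⟩
    · dsimp only
      split_ifs with hdc
      · rw [le_antisymm hdc hcd, hgc]
      · exact hkd
    · dsimp only
      split_ifs with htc
      · exact hfg t ⟨ht.1, htc⟩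
      · exact hfk t ⟨(not_le.1 htc).le, ht.2⟩
  obtain ⟨t, ht₀, hmono, ⟨m, hm⟩, hcov⟩ := exists_monotone_Icc_subset_open_cover_Icc hab
    (c := fun z : X ↦ interior {r : Icc a b | dist (f r) z < δ / 2}) (fun _ ↦ isOpen_interior)
    fun r _ ↦ mem_iUnion.2 ⟨f r, mem_interior_iff_mem_nhds.2
      (preimage_coe_mem_nhds_subtype.2 (hf r r.2))⟩
  have hsmall : ∀ n, Good (t n) (t (n + 1)) := fun n ↦ by
    obtain ⟨z, hz⟩ := hcov n
    refine exists_jumpsLT_dist_lt_of_forall_dist_lt (z := z) (hmono n.le_succ) hε hX hδ'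
      fun r hr ↦ ?_
    have hrab : r ∈ Icc a b := ⟨(t n).2.1.trans hr.1, hr.2.trans (t (n + 1)).2.2⟩
    exact (interior_subset (hz (show ⟨r, hrab⟩ ∈ Icc (t n) (t (n + 1)) from hr)).out :)
  have hpart : ∀ n, Good a (t (n + 1)) := fun n ↦ by
    induction n with
    | zero => simpa only [ht₀] using hsmall 0
    | succ n ih => exact hglue _ _ (t (n + 1)).2.1 (hmono (n + 1).le_succ) ih (hsmall (n + 1))
  simpa only [hm (m + 1) m.le_succ] using hpart m

theorem exists_continuousOn_of_jumpsLT [CompleteSpace X] {s : Set ℝ} {g : ℕ → ℝ → X} {δ : ℕ → ℝ}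
    (hδ : Tendsto δ atTop (𝓝 0)) (hg : ∀ k, JumpsLT (δ k) (g k) s) {C : ℝ}
    (hdist : ∀ t ∈ s, ∀ k, dist (g k t) (g (k + 1) t) ≤ C / 2 / 2 ^ k) :
    ∃ γ : ℝ → X, ContinuousOn γ s ∧ ∀ t ∈ s, Tendsto (g · t) atTop (𝓝 (γ t)) ∧
      dist (g 0 t) (γ t) ≤ C := by
  have hlim : ∀ t, ∃ z, t ∈ s → Tendsto (g · t) atTop (𝓝 z) := fun t ↦ by
    by_cases ht : t ∈ s
    · obtain ⟨z, hz⟩ := cauchySeq_tendsto_of_complete (cauchySeq_of_le_geometric_two (hdist t ht))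
      exact ⟨z, fun _ ↦ hz⟩
    · exact ⟨g 0 t, fun h ↦ absurd h ht⟩
  choose γ hγ using hlim
  have hle : ∀ t ∈ s, ∀ k, dist (g k t) (γ t) ≤ C / 2 ^ k := fun t ht ↦
    dist_le_of_le_geometric_two_of_tendsto (hdist t ht) (hγ t ht)
  refine ⟨γ, fun t ht ↦ Metric.tendsto_nhds.2 fun η hη ↦ ?_, fun t ht ↦
    ⟨hγ t ht, by simpa using hle t ht 0⟩⟩
  have hsmall : ∀ᶠ k in atTop, δ k + 2 * (C / 2 ^ k) < η := by
    have hC : Tendsto (fun k : ℕ ↦ C / 2 ^ k) atTop (𝓝 0) := by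
      exact tendsto_const_nhds.div_atTop (tendsto_pow_atTop_atTop_of_one_lt one_lt_two)
    have := hδ.add (hC.const_mul 2)
    rw [mul_zero, add_zero] at this
    exact this.eventually_lt_const hη
  obtain ⟨k, hk⟩ := hsmall.exists
  filter_upwards [hg k t ht, self_mem_nhdsWithin] with r hr hrs
  have hrk := hle r hrs k
  have htk := hle t ht k
  rw [dist_comm] at hrk
  linarith [dist_triangle4 (γ r) (g k r) (g k t) (γ t)]

end Jumps

section LocallyPathConnected
variable {X : Type*} [MetricSpace X]

theorem exists_continuousOn_dist_le [CompleteSpace X] {C : ℝ} (hC : 0 < C) {δ : ℕ → ℝ}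
    (hδ : ∀ k, 0 < δ k) (hδC : ∀ k, δ k ≤ C / 4 / 2 ^ k)
    (hX : ∀ k, ∀ x y : X, dist x y < δ k →
      ∃ M, IsPreconnected M ∧ x ∈ M ∧ y ∈ M ∧ M ⊆ ball x (C / 4 / 2 ^ k))
    {f : ℝ → X} (hf : JumpsLT (δ 0 / 2) f (Icc 0 1)) :
    ∃ γ : ℝ → X, ContinuousOn γ (Icc 0 1) ∧ γ 0 = f 0 ∧ γ 1 = f 1 ∧
      ∀ t ∈ Icc (0 : ℝ) 1, dist (f t) (γ t) ≤ C := by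
  let P (k : ℕ) (g : ℝ → X) : Prop := g 0 = f 0 ∧ g 1 = f 1 ∧ JumpsLT (δ k / 2) g (Icc 0 1)
  have hrefine : ∀ k g, P k g → ∃ h, P (k + 1) h ∧
      ∀ t ∈ Icc (0 : ℝ) 1, dist (g t) (h t) ≤ C / 2 / 2 ^ k := by
    rintro k g ⟨hg0, hg1, hg⟩
    obtain ⟨h, hh0, hh1, hh, hgh⟩ :=
      exists_jumpsLT_dist_lt zero_le_one (by positivity) (hX k) (half_pos (hδ (k + 1))) hg
    refine ⟨h, ⟨hh0.trans hg0, hh1.trans hg1, hh⟩, fun t ht ↦ (hgh t ht).le.trans ?_⟩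
    calc C / 4 / 2 ^ k + δ k ≤ C / 4 / 2 ^ k + C / 4 / 2 ^ k := by gcongr; exact hδC k
      _ = C / 2 / 2 ^ k := by ring
  choose! F hF hdist using hrefine
  let g (k : ℕ) : ℝ → X := k.rec f F
  have hg : ∀ k, P k (g k) := fun k ↦ by
    induction k with
    | zero => exact ⟨rfl, rfl, hf⟩
    | succ k ih => exact hF k _ ih
  have hδ0 : Tendsto (fun k ↦ δ k / 2) atTop (𝓝 0) := by
    refine squeeze_zero (fun k ↦ (half_pos (hδ k)).le)
      (fun k ↦ (half_le_self (hδ k).le).trans (hδC k)) ?_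
    exact tendsto_const_nhds.div_atTop (tendsto_pow_atTop_atTop_of_one_lt one_lt_two)
  obtain ⟨γ, hγ, hlim⟩ := exists_continuousOn_of_jumpsLT hδ0 (fun k ↦ (hg k).2.2)
    fun t ht k ↦ hdist k (g k) (hg k) t ht
  refine ⟨γ, hγ, ?_, ?_, fun t ht ↦ (hlim t ht).2⟩
  · exact tendsto_nhds_unique (hlim 0 (by simp)).1
      (tendsto_const_nhds.congr fun k ↦ (hg k).1.symm)
  · exact tendsto_nhds_unique (hlim 1 (by simp)).1
      (tendsto_const_nhds.congr fun k ↦ (hg k).2.1.symm)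

theorem UniformlyLocallyConnected.exists_pos_forall_joinedIn_ball [CompleteSpace X]
    (h : UniformlyLocallyConnected (univ : Set X)) {η : ℝ} (hη : 0 < η) :
    ∃ δ > 0, ∀ x y : X, dist x y < δ → JoinedIn (ball x η) x y := by
  have hδ : ∀ k : ℕ, ∃ δ > 0, δ ≤ η / 2 / 4 / 2 ^ k ∧ ∀ x y : X, dist x y < δ →
      ∃ M, IsPreconnected M ∧ x ∈ M ∧ y ∈ M ∧ M ⊆ ball x (η / 2 / 4 / 2 ^ k) := fun k ↦ by
    obtain ⟨δ, hδ, hM⟩ := h (η / 2 / 4 / 2 ^ k) (by positivity)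
    refine ⟨min δ (η / 2 / 4 / 2 ^ k), lt_min hδ (by positivity), min_le_right _ _,
      fun x y hxy ↦ ?_⟩
    obtain ⟨M, -, hM⟩ := hM x (mem_univ x) y (mem_univ y) (hxy.trans_le (min_le_left _ _))
    exact ⟨M, hM⟩
  choose δ hδ hδη hX using hδ
  refine ⟨δ 0 / 2, half_pos (hδ 0), fun x y hxy ↦ ?_⟩
  obtain ⟨γ, hγ, hγ0, hγ1, hdist⟩ := exists_continuousOn_dist_le (half_pos hη) hδ hδη hX
    (jumpsLT_ite (half_pos (hδ 0)) hxy (· ≤ 0) (Icc 0 1))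
  rw [if_pos le_rfl] at hγ0
  rw [if_neg one_pos.not_ge] at hγ1
  refine .ofLine hγ hγ0 hγ1 (image_subset_iff.2 fun t ht ↦ mem_ball'.2 ?_)
  have hx : dist x (if t ≤ 0 then x else y) < η / 2 := by
    split_ifs
    · simpa using half_pos hη
    · linarith [hδ 0, (hδη 0).trans_eq (by rw [pow_zero, div_one])]
  linarith [dist_triangle x (if t ≤ 0 then x else y) (γ t), hdist t ht]

theorem UniformlyLocallyConnected.locallyPathConnectedSpace [CompleteSpace X]
    (h : UniformlyLocallyConnected (univ : Set X)) : LocallyPathConnectedSpace X := by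
  refine ⟨fun x ↦ hasBasis_self.2 fun U hU ↦ ?_⟩
  obtain ⟨η, hη, hηU⟩ := Metric.mem_nhds_iff.1 hU
  obtain ⟨δ, hδ, hjoin⟩ := h.exists_pos_forall_joinedIn_ball hη
  refine ⟨pathComponentIn (ball x η) x, ?_, isPathConnected_pathComponentIn (mem_ball_self hη),
    pathComponentIn_subset.trans hηU⟩
  filter_upwards [ball_mem_nhds x hδ] with y hy using hjoin x y (mem_ball'.1 hy)

end LocallyPathConnected

section Shortcut
open unitInterval
variable {X : Type*} [PseudoMetricSpace X] {x y : X}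

/-- A monotone selection `l` of times along which the path `γ` is still continuous, with a modulus
of continuity no worse than that of `γ`; `γ ∘ l` is `γ` with some of its detours left out. -/
structure IsShortcut (γ : Path x y) (l : I → I) : Prop where
  monotone : Monotone l
  map_zero : l 0 = 0
  map_one : l 1 = 1
  dist_le : ∀ δ ε : ℝ, (∀ t t', dist t t' ≤ δ → dist (γ t) (γ t') ≤ ε) →
    ∀ t t', dist t t' ≤ δ → dist (γ (l t)) (γ (l t')) ≤ ε

theorem isShortcut_id (γ : Path x y) : IsShortcut γ id :=
  ⟨monotone_id, rfl, rfl, fun _ _ h ↦ h⟩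

theorem IsShortcut.continuous {γ : Path x y} {l : I → I} (hl : IsShortcut γ l) :
    Continuous (γ ∘ l) := by
  refine Metric.continuous_iff.2 fun t ε hε ↦ ?_
  obtain ⟨δ, hδ, h⟩ := Metric.uniformContinuous_iff.1
    (CompactSpace.uniformContinuous_of_continuous γ.continuous) (ε / 2) (half_pos hε)
  refine ⟨δ / 2, half_pos hδ, fun t' ht' ↦ (hl.dist_le (δ / 2) (ε / 2)
    (fun s s' hs ↦ (h (hs.trans_lt (half_lt_self hδ))).le) t' t ht'.le).trans_lt
    (half_lt_self hε)⟩

theorem IsShortcut.iSup {ι : Type*} [Preorder ι] [IsDirectedOrder ι] [Nonempty ι] {γ : Path x y}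
    {l : ι → I → I} (hmono : Monotone l) (hl : ∀ i, IsShortcut γ (l i)) :
    IsShortcut γ (fun t ↦ ⨆ i, l i t) where
  monotone _ _ h := iSup_mono fun i ↦ (hl i).monotone h
  map_zero := by simp only [(hl _).map_zero, ciSup_const]
  map_one := by simp only [(hl _).map_one, ciSup_const]
  dist_le δ ε h t t' ht := by
    have hlim : ∀ t, Tendsto (fun i ↦ γ (l i t)) atTop (𝓝 (γ (⨆ i, l i t))) := fun t ↦
      (γ.continuous.tendsto _).comp (tendsto_atTop_iSup fun i j hij ↦ hmono hij t)
    exact le_of_tendsto ((hlim t).dist (hlim t')) (.of_forall fun i ↦ (hl i).dist_le δ ε h t t' ht)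

theorem IsShortcut.skip {γ : Path x y} {l : I → I} (hl : IsShortcut γ l) {a b : I}
    (h : γ (l a) = γ (l b)) : IsShortcut γ (fun t ↦ if t ∈ Ioc a b then l b else l t) where
  monotone t t' ht := by
    dsimp only
    split_ifs with h1 h2 h2
    · rfl
    · exact hl.monotone (le_of_not_gt fun hlt ↦ h2 ⟨h1.1.trans_le ht, hlt.le⟩)
    · exact hl.monotone (ht.trans h2.2)
    · exact hl.monotone ht
  map_zero := by simp [hl.map_zero]
  map_one := by
    split_ifs with h1
    · rw [le_antisymm le_one' h1.2, hl.map_one]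
    · exact hl.map_one
  dist_le δ ε hγ t t' ht := by
    have hkey : ∀ s ∈ Ioc a b, ∀ s' ∉ Ioc a b, dist s s' ≤ δ →
        dist (γ (l b)) (γ (l s')) ≤ ε := fun s hs s' hs' hss ↦ by
      rcases le_or_gt s' a with hle | hlt
      · rw [← h]
        exact hl.dist_le δ ε hγ _ _ ((Real.dist_le_of_mem_uIcc
          (mem_uIcc.2 (.inr ⟨hle, hs.1.le⟩)) right_mem_uIcc).trans hss)
      · have hlt' : b < s' := not_le.1 fun hle ↦ hs' ⟨hlt, hle⟩
        exact hl.dist_le δ ε hγ _ _ ((Real.dist_le_of_mem_uIcc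
          (mem_uIcc.2 (.inl ⟨hs.2, hlt'.le⟩)) right_mem_uIcc).trans hss)
    split_ifs with h1 h2 h2
    · rw [dist_self]
      exact dist_nonneg.trans (hl.dist_le δ ε hγ t t' ht)
    · exact hkey t h1 t' h2 ht
    · rw [dist_comm]
      exact hkey t' h2 t h1 (dist_comm t t' ▸ ht)
    · exact hl.dist_le δ ε hγ t t' ht

theorem exists_isShortcut_forall_eq (γ : Path x y) : ∃ l : I → I, IsShortcut γ l ∧
    ∀ a b c, a ≤ c → c ≤ b → γ (l a) = γ (l b) → γ (l c) = γ (l a) := by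
  obtain ⟨l, -, hl, hmax⟩ := zorn_le_nonempty₀ {l | IsShortcut γ l} (fun c hcS hc l₀ hl₀ ↦ by
    have : Nonempty c := ⟨⟨l₀, hl₀⟩⟩
    have : IsDirectedOrder c := directedOn_iff_isDirectedOrder.1 hc.directedOn
    exact ⟨_, IsShortcut.iSup (Subtype.mono_coe (· ∈ c)) fun l ↦ hcS l.2,
      fun l hl t ↦ le_iSup (fun l : c ↦ l.1 t) ⟨l, hl⟩⟩) id (isShortcut_id γ)
  refine ⟨l, hl, fun a b c hac hcb h ↦ ?_⟩
  rcases hac.eq_or_lt with rfl | hac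
  · rfl
  · have hle := hmax (hl.skip h) (fun t ↦ by
      dsimp only
      split_ifs with ht
      · exact hl.monotone ht.2
      · rfl) c
    rw [if_pos ⟨hac, hcb⟩] at hle
    rw [h, (hl.monotone hcb).antisymm hle]

theorem continuous_infDist_extend_image_Iic (γ : Path x y) :
    Continuous fun p : I × ℝ ↦ infDist (γ.extend p.2) (γ '' Iic p.1) := by
  have hsInf : ∀ p : I × ℝ, infDist (γ.extend p.2) (γ '' Iic p.1) =
      sInf ((fun q : I ↦ dist (γ.extend p.2) (γ (q ⊓ p.1))) '' univ) := fun p ↦ by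
    have hIic : (fun q : I ↦ q ⊓ p.1) '' univ = Iic p.1 :=
      Subset.antisymm (image_subset_iff.2 fun q _ ↦ inf_le_right (a := q))
        fun q hq ↦ ⟨q, mem_univ _, inf_of_le_left hq⟩
    rw [infDist_eq_iInf, ← sInf_image', ← hIic, image_image, image_image]
  simp only [hsInf]
  exact isCompact_univ.continuous_sInf <|
    (γ.continuous_extend.comp (continuous_snd.comp continuous_fst)).dist <|
      γ.continuous.comp (continuous_snd.inf (continuous_fst.comp continuous_fst))

/-- The mean distance of a point of the path `γ` from the part of `γ` traversed up to time `t`. It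
drops exactly when `γ` reaches new points, so it serves to reparametrize a path that only returns to
points at which it has been resting. -/
noncomputable def meanDist (γ : Path x y) (t : I) : ℝ :=
  ∫ r in (0 : ℝ)..1, infDist (γ.extend r) (γ '' Iic t)

theorem continuous_meanDist (γ : Path x y) : Continuous (meanDist γ) :=
  intervalIntegral.continuous_parametric_intervalIntegral_of_continuous'
    (f := fun t r ↦ infDist (γ.extend r) (γ '' Iic t))
    (continuous_infDist_extend_image_Iic γ) 0 1

theorem meanDist_eq {γ : Path x y} (hγ : ∀ a b c, a ≤ c → c ≤ b → γ a = γ b → γ c = γ a)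
    {a b : I} (hab : a ≤ b) (h : γ a = γ b) : meanDist γ a = meanDist γ b := by
  have : γ '' Iic b = γ '' Iic a := by
    refine Subset.antisymm ?_ (image_mono (Iic_subset_Iic.2 hab))
    rintro _ ⟨c, hc, rfl⟩
    rcases le_total c a with hca | hac
    · exact mem_image_of_mem γ hca
    · exact ⟨a, self_mem_Iic, (hγ a b c hac hc h).symm⟩
  rw [meanDist, meanDist, this]

end Shortcut

section Arc
open unitInterval
variable {X : Type*} [MetricSpace X] {x y : X}

theorem meanDist_lt {γ : Path x y} (hγ : ∀ a b c, a ≤ c → c ≤ b → γ a = γ b → γ c = γ a)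
    {a b : I} (hab : a ≤ b) (h : γ a ≠ γ b) : meanDist γ b < meanDist γ a := by
  have hcont : ∀ t, Continuous fun r : ℝ ↦ infDist (γ.extend r) (γ '' Iic t) := fun t ↦
    (continuous_infDist_extend_image_Iic γ).comp₂ continuous_const continuous_id
  have hb : γ b ∉ γ '' Iic a := by
    rintro ⟨c, hc, hcb⟩
    exact h ((hγ c b a hc hab hcb).trans hcb)
  refine intervalIntegral.integral_lt_integral_of_continuousOn_of_le_of_exists_lt one_pos
    (hcont b).continuousOn (hcont a).continuousOn
    (fun r _ ↦ infDist_le_infDist_of_subset (image_mono (Iic_subset_Iic.2 hab))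
      ⟨γ a, a, self_mem_Iic, rfl⟩) ⟨b, b.2, ?_⟩
  rw [γ.extend_apply b.2, infDist_zero_of_mem (mem_image_of_mem γ self_mem_Iic)]
  exact ((isClosed_Iic.isCompact.image γ.continuous).isClosed.notMem_iff_infDist_pos
    ⟨γ a, a, self_mem_Iic, rfl⟩).1 hb

theorem antitone_meanDist {γ : Path x y}
    (hγ : ∀ a b c, a ≤ c → c ≤ b → γ a = γ b → γ c = γ a) : Antitone (meanDist γ) := fun a b hab ↦
  (eq_or_ne (γ a) (γ b)).elim (fun h ↦ (meanDist_eq hγ hab h).ge) fun h ↦ (meanDist_lt hγ hab h).le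

theorem exists_continuous_surjective_eq_iff_eq {γ : Path x y}
    (hγ : ∀ a b c, a ≤ c → c ≤ b → γ a = γ b → γ c = γ a) (hxy : x ≠ y) :
    ∃ φ : I → I, Continuous φ ∧ Function.Surjective φ ∧ φ 0 = 0 ∧ φ 1 = 1 ∧
      ∀ a b, φ a = φ b ↔ γ a = γ b := by
  have heq : ∀ a b, meanDist γ a = meanDist γ b ↔ γ a = γ b := fun a b ↦ by
    wlog hab : a ≤ b generalizing a b
    · rw [eq_comm, this b a (le_of_not_ge hab), eq_comm]
    exact ⟨fun h ↦ by_contra fun hne ↦ (meanDist_lt hγ hab hne).ne' h, meanDist_eq hγ hab⟩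
  have hpos : 0 < meanDist γ 0 - meanDist γ 1 :=
    sub_pos.2 (meanDist_lt hγ zero_le_one (by simpa using hxy))
  let φ : I → I := fun t ↦ ⟨(meanDist γ 0 - meanDist γ t) / (meanDist γ 0 - meanDist γ 1),
    div_nonneg (sub_nonneg.2 (antitone_meanDist hγ nonneg')) hpos.le,
    (div_le_one hpos).2 (sub_le_sub_left (antitone_meanDist hγ le_one') _)⟩
  have hφ : Continuous φ :=
    ((continuous_const.sub (continuous_meanDist γ)).div_const _).subtype_mk _
  have hφ0 : φ 0 = 0 := Subtype.ext (by simp [φ])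
  have hφ1 : φ 1 = 1 := Subtype.ext (div_self hpos.ne')
  refine ⟨φ, hφ, fun r ↦ intermediate_value_univ 0 1 hφ ?_, hφ0, hφ1, fun a b ↦ ?_⟩
  · rw [hφ0, hφ1]
    exact ⟨nonneg', le_one'⟩
  · rw [Subtype.ext_iff, div_left_inj' hpos.ne', sub_right_inj, heq]

theorem exists_injective_path (γ : Path x y) (hxy : x ≠ y) :
    ∃ τ : Path x y, Function.Injective τ ∧ range τ ⊆ range γ := by
  obtain ⟨l, hl, hfib⟩ := exists_isShortcut_forall_eq γ
  let δ : Path x y := ⟨⟨γ ∘ l, hl.continuous⟩, by simp [hl.map_zero], by simp [hl.map_one]⟩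
  obtain ⟨φ, hφ, hsurj, hφ0, hφ1, hφδ⟩ := exists_continuous_surjective_eq_iff_eq (γ := δ) hfib hxy
  have hquot : IsQuotientMap (⟨φ, hφ⟩ : C(I, I)) := .of_surjective_continuous hsurj hφ
  let τ := hquot.lift δ.toContinuousMap fun a b ↦ (hφδ a b).1
  have hτ : ∀ t, τ (φ t) = γ (l t) :=
    DFunLike.congr_fun (hquot.lift_comp δ.toContinuousMap fun a b ↦ (hφδ a b).1)
  refine ⟨⟨τ, ?_, ?_⟩, hsurj.forall₂.2 fun a b hab ↦ ?_, ?_⟩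
  · exact (congrArg τ hφ0.symm).trans ((hτ 0).trans δ.source)
  · exact (congrArg τ hφ1.symm).trans ((hτ 1).trans δ.target)
  · exact (hφδ a b).2 ((hτ a).symm.trans (Eq.trans hab (hτ b)))
  · rintro _ ⟨t, rfl⟩
    obtain ⟨t, rfl⟩ := hsurj t
    exact ⟨l t, (hτ t).symm⟩

end Arc

section Chord
open Complex

theorem sub_eq_log_sub_log {A : Type*} [TopologicalSpace A] [PreconnectedSpace A] {L F : A → ℂ}
    (hL : Continuous L) (hLF : ∀ a, exp (L a) = F a) {e : ℂ} (he : e ≠ 0)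
    (hre : ∀ a, 0 ≤ (e * F a).re) (a b : A) : L a - L b = log (e * F a) - log (e * F b) := by
  obtain rfl : F = fun a ↦ exp (L a) := funext fun a ↦ (hLF a).symm
  have hne : ∀ a, e * exp (L a) ≠ 0 := fun a ↦ mul_ne_zero he (exp_ne_zero _)
  have hslit : ∀ a, e * exp (L a) ∈ slitPlane := fun a ↦
    mem_slitPlane_iff_not_le_zero.2 fun h ↦ hne a <| by
      have := Complex.le_def.1 h
      exact Complex.ext (this.1.antisymm (hre a)) this.2
  refine eqOn_of_exp_eqOn isPreconnected_univ (F := fun a ↦ L a - L b)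
    (G := fun a ↦ log (e * exp (L a)) - log (e * exp (L b))) (by fun_prop)
    ((Continuous.clog (by fun_prop) hslit).sub continuous_const).continuousOn (fun x _ ↦ ?_)
    (mem_univ b) (by simp) (mem_univ a)
  rw [exp_sub, exp_sub, exp_log (hne x), exp_log (hne b), mul_div_mul_left _ _ he]

theorem hasContinuousLog_path_sub_sub {a b w : ℂ} (γ : Path a b) (hw : ∀ t t', γ t' - γ t ≠ w) :
    HasContinuousLog fun p : unitInterval × unitInterval ↦ γ p.2 - γ p.1 - w := by
  have hext := (hasContinuousLog_of_simplyConnectedSpace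
    (g := fun p : ℝ × ℝ ↦ γ.extend p.2 - γ.extend p.1 - w) (by fun_prop)
    fun p ↦ sub_ne_zero.2 (hw _ _)).comp
    (φ := fun p : unitInterval × unitInterval ↦ ((p.1 : ℝ), (p.2 : ℝ))) (by fun_prop)
  simpa [Function.comp_def] using hext

-- `d` is the change of a logarithm of `γ t' - γ t - 1` along the part `t ≤ t'` of the line
-- `t = const`, plus the change of one of `γ t' + c - γ t - 1` along the part `t' ≤ t`.
theorem exists_forall_eq_log_sub_log {a c : ℂ} (γ : Path a (a + c))
    (h₁ : ∀ t t', γ t' - γ t ≠ 1) (h₂ : ∀ t t', γ t' - γ t ≠ 1 - c) (hc : c.im = 0) :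
    ∃ d : ℂ, ∀ t e, e ≠ 0 → e.re = 0 → (∀ t', 0 ≤ (e * (γ t' - γ t)).re) →
      d = log (e * (c - 1)) - log (-e) := by
  obtain ⟨L, hL, hLγ⟩ := hasContinuousLog_path_sub_sub γ h₁
  obtain ⟨M, hM, hMγ⟩ := hasContinuousLog_path_sub_sub γ h₂
  let d : unitInterval → ℂ := fun t ↦ L (t, 1) - L (t, t) + (M (t, t) - M (t, 0))
  have hends : ∀ t, γ 1 - γ t - 1 = γ 0 - γ t - (1 - c) := fun t ↦ by
    rw [γ.source, γ.target]
    ring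
  have hexpd : ∀ t, exp (d t) = 1 - c := fun t ↦ by
    have : γ 0 - γ t - (1 - c) ≠ 0 := (hMγ (t, 0)).symm.trans_ne (exp_ne_zero _)
    rw [exp_add, exp_sub, exp_sub, hLγ, hLγ, hMγ, hMγ]
    dsimp only
    rw [hends]
    field_simp
    ring
  have hconst : ∀ t, d 0 = d t := fun t ↦
    eqOn_of_exp_eqOn isPreconnected_univ (F := d) (G := fun _ ↦ d t) (by fun_prop) (by fun_prop)
      (fun s _ ↦ (hexpd s).trans (hexpd t).symm) (mem_univ t) rfl (mem_univ 0)
  refine ⟨d 0, fun t e he hre hγ ↦ (hconst t).trans ?_⟩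
  have hL' := sub_eq_log_sub_log (hL.comp (Continuous.prodMk_right t)) (fun t' ↦ hLγ (t, t')) he
    (fun t' ↦ by simpa [mul_sub, hre] using hγ t') 1 t
  have hM' := sub_eq_log_sub_log (hM.comp (Continuous.prodMk_right t)) (fun t' ↦ hMγ (t, t')) he
    (fun t' ↦ by simpa [mul_sub, hre, hc] using hγ t') t 0
  simp only [Function.comp_apply] at hL' hM'
  rw [show d t = _ from congrArg₂ (· + ·) hL' hM', hends]
  simp

-- Take `t` where `(γ t).im` is maximal, and then where it is minimal.
theorem exists_sub_eq_one_or_sub_eq_one_sub {a : ℂ} {c : ℝ} (hc : 1 < c) (γ : Path a (a + c)) :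
    ∃ t t', γ t' - γ t = 1 ∨ γ t' - γ t = 1 - c := by
  by_contra! hne
  obtain ⟨d, hd⟩ := exists_forall_eq_log_sub_log γ (fun t t' ↦ (hne t t').1)
    (fun t t' ↦ (hne t t').2) (ofReal_im c)
  obtain ⟨t₁, -, ht₁⟩ := isCompact_univ.exists_isMaxOn univ_nonempty
    (f := fun t ↦ (γ t).im) (by fun_prop)
  obtain ⟨t₂, -, ht₂⟩ := isCompact_univ.exists_isMinOn univ_nonempty
    (f := fun t ↦ (γ t).im) (by fun_prop)
  have hd₁ := hd t₁ I I_ne_zero I_re fun t' ↦ by simpa using ht₁ (mem_univ t')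
  have hd₂ := hd t₂ (-I) (neg_ne_zero.2 I_ne_zero) (by simp) fun t' ↦ by
    simpa using ht₂ (mem_univ t')
  have hlogim : ∀ e : ℂ, (log (e * (c - 1))).im = (log e).im := fun e ↦ by
    rw [mul_comm, log_im, log_im, ← ofReal_one, ← ofReal_sub, arg_real_mul _ (sub_pos.2 hc)]
  have him := congrArg im (hd₁.symm.trans hd₂)
  rw [sub_im, sub_im, hlogim, hlogim, neg_neg, log_I, log_neg_I] at him
  norm_num at him
  linarith [Real.pi_pos]

end Chord

section Loop
open Complex
variable {a b : ℂ}

theorem one_le_norm_sub_of_exp_eq {z w : ℂ} (hexp : exp z = exp w) (hzw : z ≠ w) :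
    1 ≤ ‖z - w‖ := by
  obtain ⟨n, hn⟩ := exp_eq_exp_iff_exists_int.1 hexp
  have hn0 : n ≠ 0 := by
    rintro rfl
    exact hzw (by simpa using hn)
  have h1 : (1 : ℝ) ≤ |(n : ℝ)| := mod_cast Int.one_le_abs hn0
  rw [hn, add_sub_cancel_left, norm_mul, norm_mul, norm_mul, norm_I, norm_intCast, norm_ofNat,
    norm_real, Real.norm_of_nonneg Real.pi_pos.le, mul_one]
  nlinarith [Real.pi_gt_three]

theorem exists_dist_le_of_exp_eq (γ : Path a b) (hab : a ≠ b) (hexp : exp a = exp b) :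
    ∃ t₀ t₁, exp (γ t₀) = exp (γ t₁) ∧ γ t₀ ≠ γ t₁ ∧
      ∀ s s', exp (γ s) = exp (γ s') → γ s ≠ γ s' → dist t₀ t₁ ≤ dist s s' := by
  let P : Set (unitInterval × unitInterval) :=
    {p | exp (γ p.1) = exp (γ p.2)} ∩ {p | 1 ≤ ‖γ p.1 - γ p.2‖}
  have hP : IsClosed P :=
    IsClosed.inter (isClosed_eq (by fun_prop) (by fun_prop))
      (isClosed_le (by fun_prop) (by fun_prop))
  have h01 : ((0, 1) : unitInterval × unitInterval) ∈ P := by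
    simpa [P, hexp] using one_le_norm_sub_of_exp_eq hexp hab
  obtain ⟨p, ⟨hpexp, hp1⟩, hmin⟩ := hP.isCompact.exists_isMinOn ⟨_, h01⟩
    (f := fun p ↦ dist p.1 p.2) (by fun_prop)
  refine ⟨p.1, p.2, hpexp, fun h ↦ ?_, fun s s' hs hne ↦
    hmin (show (s, s') ∈ P from ⟨hs, one_le_norm_sub_of_exp_eq hs hne⟩)⟩
  norm_num [h] at hp1

theorem eq_and_eq_or_eq_and_eq_of_dist_le {t₀ t₁ s s' : unitInterval} (hs : s ∈ uIcc t₀ t₁)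
    (hs' : s' ∈ uIcc t₀ t₁) (hdist : dist t₀ t₁ ≤ dist s s') :
    (s = t₀ ∧ s' = t₁) ∨ (s = t₁ ∧ s' = t₀) := by
  simp only [Subtype.dist_eq, Real.dist_eq, Subtype.ext_iff] at *
  rcases mem_uIcc.1 hs with ⟨_, _⟩ | ⟨_, _⟩ <;> rcases mem_uIcc.1 hs' with ⟨_, _⟩ | ⟨_, _⟩ <;>
    simp only [← Subtype.coe_le_coe] at * <;> grind

theorem exists_path_forall_exp_eq (γ : Path a b) (hab : a ≠ b) (hexp : exp a = exp b) :
    ∃ (a' b' : ℂ) (τ : Path a' b'), a' ≠ b' ∧ exp a' = exp b' ∧ range τ ⊆ range γ ∧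
      ∀ t t', t < t' → exp (τ t) = exp (τ t') → t = 0 ∧ t' = 1 := by
  obtain ⟨t₀, t₁, hexp', hne, hmin⟩ := exists_dist_le_of_exp_eq γ hab hexp
  obtain ⟨τ, hτ, hrange⟩ := exists_injective_path (γ.subpath t₀ t₁) hne
  have hsub : range τ ⊆ range γ := hrange.trans (range_comp_subset_range _ γ)
  refine ⟨_, _, τ, hne, hexp', hsub, fun t t' htt' hτexp ↦ ?_⟩
  rw [Path.range_subpath] at hrange
  obtain ⟨s, hs, hst⟩ := hrange (mem_range_self t)
  obtain ⟨s', hs', hst'⟩ := hrange (mem_range_self t')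
  have hdist := hmin s s' (by rwa [hst, hst']) (by rw [hst, hst']; exact hτ.ne htt'.ne)
  obtain ⟨rfl, rfl⟩ | ⟨rfl, rfl⟩ := eq_and_eq_or_eq_and_eq_of_dist_le hs hs' hdist
  · exact ⟨hτ (hst.symm.trans τ.source.symm), hτ (hst'.symm.trans τ.target.symm)⟩
  · have ht : t = 1 := hτ (hst.symm.trans τ.target.symm)
    exact absurd (ht ▸ htt') unitInterval.le_one'.not_gt

theorem eq_one_of_forall_exp_eq {n : ℤ} (hn : 0 < n) (τ : Path a (a + n * (2 * Real.pi * I)))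
    (hτ : ∀ t t', t < t' → exp (τ t) = exp (τ t') → t = 0 ∧ t' = 1) : n = 1 := by
  by_contra hn1
  have hc : (1 : ℝ) < n := mod_cast (by lia : 1 < n)
  let γ : Path (a / (2 * Real.pi * I)) (a / (2 * Real.pi * I) + (n : ℝ)) :=
    (τ.map (f := (· / (2 * Real.pi * I))) (by fun_prop)).cast rfl
      (by rw [add_div, mul_div_cancel_right₀ _ two_pi_I_ne_zero, ofReal_intCast])
  obtain ⟨t, t', h⟩ := exists_sub_eq_one_or_sub_eq_one_sub hc γ
  obtain ⟨m, hm, hm1⟩ : ∃ m : ℤ, τ t' = τ t + m * (2 * Real.pi * I) ∧ (m = 1 ∨ m = 1 - n) := by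
    have hsub : ∀ w, γ t' - γ t = w → τ t' = τ t + w * (2 * Real.pi * I) := fun w hw ↦ by
      have hdiv : (τ t' - τ t) / (2 * Real.pi * I) = w := (sub_div _ _ _).trans hw
      rw [← (div_eq_iff two_pi_I_ne_zero).1 hdiv, add_sub_cancel]
    rcases h with h | h
    · exact ⟨1, mod_cast hsub _ h, .inl rfl⟩
    · exact ⟨1 - n, mod_cast hsub _ h, .inr rfl⟩
  have hexp : exp (τ t') = exp (τ t) := exp_eq_exp_iff_exists_int.2 ⟨m, hm⟩
  rcases lt_trichotomy t t' with htt' | rfl | htt'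
  · obtain ⟨rfl, rfl⟩ := hτ t t' htt' hexp.symm
    have : m = n := by simpa [two_pi_I_ne_zero] using hm.symm
    lia
  · have : m = 0 := by simpa [two_pi_I_ne_zero] using hm
    lia
  · obtain ⟨rfl, rfl⟩ := hτ t' t htt' hexp
    have : n + m = 0 := by simpa [two_pi_I_ne_zero, add_assoc, ← add_mul, ← Int.cast_add] using hm
    lia

theorem exists_path_add_two_pi_I (γ : Path a b) (hab : a ≠ b) (hexp : exp a = exp b) :
    ∃ (a' : ℂ) (τ : Path a' (a' + 2 * Real.pi * I)), range τ ⊆ range γ ∧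
      ∀ t t', t < t' → exp (τ t) = exp (τ t') → t = 0 ∧ t' = 1 := by
  obtain ⟨a', b', τ, hne, hexp', hrange, hτ⟩ := exists_path_forall_exp_eq γ hab hexp
  obtain ⟨n, rfl⟩ := exp_eq_exp_iff_exists_int.1 hexp'.symm
  rcases lt_trichotomy n 0 with hn | rfl | hn
  · have hsymm : ∀ t t', t < t' → exp (τ.symm t) = exp (τ.symm t') → t = 0 ∧ t' = 1 :=
      fun t t' htt' h ↦ by
        have := hτ (unitInterval.symm t') (unitInterval.symm t) (by simpa using htt') h.symm
        simpa [and_comm] using this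
    obtain rfl := neg_eq_iff_eq_neg.1 <|
      eq_one_of_forall_exp_eq (neg_pos.2 hn) (τ.symm.cast rfl (by push_cast; ring)) hsymm
    exact ⟨_, τ.symm.cast rfl (by push_cast; ring), by simpa using hrange, hsymm⟩
  · simp at hne
  · obtain rfl := eq_one_of_forall_exp_eq hn τ hτ
    exact ⟨a', τ.cast rfl (by simp), by simpa using hrange, hτ⟩

end Loop

section Rotation
open Complex

theorem exists_circle_embedding {a : ℂ} (τ : Path a (a + 2 * Real.pi * I))
    (hτ : ∀ t t', t < t' → exp (τ t) = exp (τ t') → t = 0 ∧ t' = 1) :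
    ∃ ℓ : Circle → ℂ, Continuous ℓ ∧ Function.Injective (fun z : Circle ↦ exp (ℓ z) * z) ∧
      ∀ z : Circle, ∃ t, exp (ℓ z) * z = exp (τ t) := by
  let e := AddCircle.homeomorphCircle (T := 1) one_ne_zero
  let q : ℝ → ℂ := fun t ↦ τ.extend t - 2 * Real.pi * I * t
  have hq : Continuous (AddCircle.liftIco 1 0 q) :=
    AddCircle.liftIco_zero_continuous (by simp [q]) (by fun_prop)
  have hlift : ∀ z : Circle, ∃ t : unitInterval, t < 1 ∧ z = e (t : ℝ) ∧
      exp (AddCircle.liftIco 1 0 q (e.symm z)) * z = exp (τ t) := fun z ↦ by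
    obtain ⟨z, rfl⟩ := e.surjective z
    obtain ⟨t, ht, rfl⟩ : z ∈ QuotientAddGroup.mk '' Ico (0 : ℝ) (0 + 1) :=
      AddCircle.coe_image_Ico_eq (1 : ℝ) 0 ▸ mem_univ z
    have ht' : t ∈ Ico (0 : ℝ) 1 := by simpa using ht
    refine ⟨⟨t, ht'.1, ht'.2.le⟩, ht'.2, rfl, ?_⟩
    rw [e.symm_apply_apply, AddCircle.liftIco_coe_apply ht, AddCircle.homeomorphCircle_apply,
      AddCircle.toCircle_apply_mk, Circle.coe_exp, ← exp_add]
    congr 1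
    simp only [q, τ.extend_apply ⟨ht'.1, ht'.2.le⟩]
    push_cast
    ring
  refine ⟨_, hq.comp e.symm.continuous, fun z z' h ↦ ?_, fun z ↦ ?_⟩
  · obtain ⟨t, ht1, hzt, ht⟩ := hlift z
    obtain ⟨t', ht1', hzt', ht'⟩ := hlift z'
    have hexp : exp (τ t) = exp (τ t') := ht.symm.trans (h.trans ht')
    rcases lt_trichotomy t t' with hlt | rfl | hlt
    · exact absurd (hτ t t' hlt hexp).2 ht1'.ne
    · exact hzt.trans hzt'.symm
    · exact absurd (hτ t' t hlt hexp.symm).2 ht1.ne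
  · obtain ⟨t, -, -, ht⟩ := hlift z
    exact ⟨t, ht⟩

theorem exists_continuous_circle_leftInverse {X : Set ℂ} {u : ℂ} (hu : u ∉ X) {ℓ : Circle → ℂ}
    (hℓ : Continuous ℓ) (hinj : Function.Injective fun z : Circle ↦ exp (ℓ z) * z)
    (hX : ∀ z : Circle, u + exp (ℓ z) * z ∈ X) :
    ∃ k : X → Circle, Continuous k ∧ ∀ z : Circle, k ⟨u + exp (ℓ z) * z, hX z⟩ = z := by
  let J : Circle → X := fun z ↦ ⟨u + exp (ℓ z) * z, hX z⟩
  have hJ : Continuous J := by fun_prop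
  have hJinj : Function.Injective J := fun z z' h ↦ hinj (add_left_cancel (congrArg Subtype.val h))
  obtain ⟨L, hL⟩ := ContinuousMap.exists_extension (hJ.isClosedEmbedding hJinj) ⟨ℓ, hℓ⟩
  have hLJ : ∀ z, L (J z) = ℓ z := DFunLike.congr_fun hL
  have hw0 : ∀ x : X, (x - u) * exp (-L x) ≠ 0 := fun x ↦
    mul_ne_zero (sub_ne_zero.2 (ne_of_mem_of_not_mem x.2 hu)) (exp_ne_zero _)
  let w : X → ℂ := fun x ↦ (x - u) * exp (-L x)
  have hw : ∀ x, ‖w x / ‖w x‖‖ = 1 := fun x ↦ by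
    rw [norm_div, norm_real, norm_norm, div_self (norm_ne_zero_iff.2 (hw0 x))]
  refine ⟨fun x ↦ ⟨w x / ‖w x‖, mem_sphere_zero_iff_norm.2 (hw x)⟩,
    Continuous.subtype_mk (.div (by fun_prop) (by fun_prop)
      fun x ↦ ofReal_ne_zero.2 (norm_ne_zero_iff.2 (hw0 x))) _, fun z ↦ Circle.ext ?_⟩
  have hwJ : w (J z) = z := by
    simp only [w, hLJ, J]
    rw [add_sub_cancel_left, mul_right_comm, ← exp_add, add_neg_cancel, exp_zero, one_mul]
  change w (J z) / ‖w (J z)‖ = z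
  rw [hwJ, Circle.norm_coe, ofReal_one, div_one]

theorem circle_exp_one_pow_ne_one {m : ℕ} (hm : m ≠ 0) : Circle.exp 1 ^ m ≠ 1 := fun h ↦ by
  rw [← Circle.exp_natCast_mul, mul_one, Circle.exp_eq_one] at h
  obtain ⟨n, hn⟩ := h
  have hn0 : (n : ℝ) ≠ 0 := by
    rintro h0
    exact hm (by simpa [h0] using hn)
  refine irrational_pi ⟨m / (2 * n), ?_⟩
  push_cast
  rw [hn]
  field_simp

theorem iterate_mul_left_comp_ne {A G : Type*} [Group G] {J : G → A} {k : A → G}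
    (hkJ : Function.LeftInverse k J) {ζ : G} {m : ℕ} (hm : ζ ^ m ≠ 1) (x : A) :
    (fun a ↦ J (ζ * k a))^[m] x ≠ x := fun h ↦ by
  have hsemi : Function.Semiconj k (fun a ↦ J (ζ * k a)) (ζ * ·) := fun a ↦ hkJ _
  have := (hsemi.iterate_right m).eq x
  rw [h, mul_left_iterate] at this
  exact hm (right_eq_mul.1 this)

theorem exists_continuous_forall_iterate_ne {X S : Set ℂ} {u : ℂ} (hu : u ∉ X) (hSX : S ⊆ X)
    (h : HasEssentialLoop u S) : ∃ f : X → X, Continuous f ∧ (∀ x, (f x : ℂ) ∈ S) ∧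
      ∀ x m, 1 ≤ m → f^[m] x ≠ x := by
  obtain ⟨a, b, γ, hab, hexp, hγ⟩ := h
  obtain ⟨a', τ, hrange, hτ⟩ := exists_path_add_two_pi_I γ hab hexp
  obtain ⟨ℓ, hℓ, hinj, hℓτ⟩ := exists_circle_embedding τ hτ
  have hS : ∀ z : Circle, u + exp (ℓ z) * z ∈ S := fun z ↦ by
    obtain ⟨t, ht⟩ := hℓτ z
    obtain ⟨s, hs⟩ := hrange (mem_range_self t)
    rw [ht, ← hs]
    exact hγ s
  obtain ⟨k, hk, hkJ⟩ := exists_continuous_circle_leftInverse hu hℓ hinj fun z ↦ hSX (hS z)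
  exact ⟨fun x ↦ ⟨u + exp (ℓ (Circle.exp 1 * k x)) * (Circle.exp 1 * k x : Circle), hSX (hS _)⟩,
    by fun_prop, fun x ↦ hS _,
    fun x m hm ↦ iterate_mul_left_comp_ne hkJ (circle_exp_one_pow_ne_one (by lia)) x⟩

end Rotation

section Holes
open Complex
variable {X : Set ℂ}

-- By Borsuk's theorem the identity of `C` has no continuous logarithm relative to `u`.
theorem hasEssentialLoop_of_connectedComponentIn_subset_ball [LocallyPathConnectedSpace X]
    (hX : IsClosed X) {C : Set X} (hCo : IsOpen C) (hC : IsPathConnected C) {p : X} {r : ℝ}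
    (hrC : closedBall p r ⊆ C) {u : ℂ} (hu : u ∉ X)
    (hO : connectedComponentIn Xᶜ u ⊆ ball (p : ℂ) r) :
    HasEssentialLoop u (range fun c : C ↦ ((c : X) : ℂ)) := by
  by_contra hloop
  have : PathConnectedSpace C := isPathConnected_iff_pathConnectedSpace.1 hC
  have : LocallyPathConnectedSpace C := hCo.locallyPathConnectedSpace
  have hlog := hasContinuousLog_sub_of_not_hasEssentialLoop
    (g := fun c : C ↦ ((c : X) : ℂ)) (u := u) (by fun_prop)
    (fun c hc ↦ hu (hc ▸ c.1.2)) hloop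
  refine not_hasContinuousLog_sub_of_frontier_subset (mem_connectedComponentIn hu)
    (isBounded_ball.subset hO) (hX.inter isClosed_closedBall) (subset_inter ?_ ?_)
    (hlog.comp (φ := fun z : ↥(X ∩ closedBall (p : ℂ) r) ↦ (⟨⟨z, z.2.1⟩, hrC z.2.2⟩ : C))
      (by fun_prop))
  · exact frontier_connectedComponentIn_compl_subset hX u
  · exact frontier_subset_closure.trans ((closure_mono hO).trans closure_ball_subset_closedBall)

theorem _root_.HasWLPPP.exists_not_connectedComponentIn_subset_ball [LocallyPathConnectedSpace X]
    (h : HasWLPPP X) (hX : IsClosed X) (p : X) :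
    ∃ ε > 0, ∀ u ∉ X, ¬ connectedComponentIn Xᶜ u ⊆ ball (p : ℂ) ε := by
  obtain ⟨𝓑, hbasis, hper⟩ := h
  obtain ⟨B, hB, hpB, -⟩ := hbasis.exists_subset_of_mem_open (mem_univ p) isOpen_univ
  have hCo : IsOpen (pathComponentIn B p) := (hbasis.isOpen hB).pathComponentIn p
  obtain ⟨ε, hε, hεC⟩ :=
    nhds_basis_closedBall.mem_iff.1 (hCo.mem_nhds (mem_pathComponentIn_self hpB))
  refine ⟨ε, hε, fun u hu hO ↦ ?_⟩
  have hCX : range (fun c : pathComponentIn B p ↦ ((c : X) : ℂ)) ⊆ X :=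
    range_subset_iff.2 fun c ↦ c.1.2
  obtain ⟨f, hf, hfC, hfper⟩ := exists_continuous_forall_iterate_ne hu hCX
    (hasEssentialLoop_of_connectedComponentIn_subset_ball hX hCo
      (isPathConnected_pathComponentIn hpB) hεC hu hO)
  have hfB : f '' closure B ⊆ B := image_subset_iff.2 fun x _ ↦ by
    obtain ⟨c, hc⟩ := hfC x
    have hfx : c = f x := Subtype.ext hc
    exact mem_preimage.2 (pathComponentIn_subset (hfx ▸ c.2))
  obtain ⟨x, -, m, hm, hx⟩ := hper B hB f hf hfB
  exact hfper x m hm hx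

theorem closure_interior_eq_of_frontier_subset {Y : Type*} [TopologicalSpace Y] {U A : Set Y}
    (hA : IsClosed A) (hU : IsOpen U) (hUA : U ⊆ A) (hfr : frontier A ⊆ closure U) :
    closure (interior A) = A := by
  refine (closure_minimal interior_subset hA).antisymm fun x hx ↦ ?_
  by_cases hxi : x ∈ interior A
  · exact subset_closure hxi
  · exact closure_mono (hU.subset_interior_iff.2 hUA) (hfr ⟨subset_closure hx, hxi⟩)

theorem exists_isOpen_hasFPP_closure [CompactSpace X] [LocallyConnectedSpace X] (p : X) {r : ℝ}
    (hr : 0 < r) (hhole : ∀ u ∉ X, ¬ connectedComponentIn Xᶜ u ⊆ closedBall (p : ℂ) r) :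
    ∃ B : Set X, IsOpen B ∧ p ∈ B ∧ B ⊆ closedBall p r ∧ HasFPP (closure B) := by
  have hE : 1 < Module.rank ℝ ℂ := by simp
  set U : Set X := chainNhd p (r / 2)
  have hUo : IsOpen U := isOpen_chainNhd (half_pos hr)
  set K : Set ℂ := Subtype.val '' closure U
  have hK : IsCompact K := isClosed_closure.isCompact.image continuous_subtype_val
  have hKconn : IsConnected K := (isConnected_chainNhd (half_pos hr)).closure.image _
    continuous_subtype_val.continuousOn
  have hKball : K ⊆ closedBall (p : ℂ) r := image_subset_iff.2 <|
    closure_minimal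
      (by simpa [mul_div_cancel₀] using chainNhd_subset_closedBall (p := p) (half_pos hr))
      isClosed_closedBall
  have hfill : fill K ⊆ closedBall (p : ℂ) r := fill_subset_closedBall hE hKball
  have hfillX : fill K ⊆ X := fun y hy ↦ by_contra fun hyX ↦ hhole y hyX <|
    (connectedComponentIn_subset_fill (Subtype.coe_image_subset X _) hy).trans hfill
  have hUfill : closure U ⊆ Subtype.val ⁻¹' fill K := image_subset_iff.1 (subset_fill K)
  have hcl : closure (interior (Subtype.val ⁻¹' fill K : Set X)) = Subtype.val ⁻¹' fill K := by
    refine closure_interior_eq_of_frontier_subset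
      ((isClosed_fill hK.isClosed).preimage continuous_subtype_val) hUo
      (subset_closure.trans hUfill) fun x hx ↦ ?_
    obtain ⟨y, hy, hyx⟩ := frontier_fill_subset hK.isClosed
      (continuous_subtype_val.frontier_preimage_subset _ hx)
    exact Subtype.ext hyx ▸ hy
  have hfpp : HasFPP (fill K) := hasFPP_of_uniformlyLocallyConnected (isCompact_fill hE hK)
    (isConnected_fill hK.isClosed hKconn) (isPreconnected_compl_fill hE hK.isBounded)
    (subset_fill K) (frontier_fill_subset hK.isClosed)
    ((hasPropertyS_chainNhd (half_pos hr)).uniformlyLocallyConnected_closure.image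
      isometry_subtype_coe)
  refine ⟨interior (Subtype.val ⁻¹' fill K), isOpen_interior,
    hUo.subset_interior_iff.2 (subset_closure.trans hUfill) (mem_chainNhd p _),
    interior_subset.trans fun x hx ↦ hfill hx, ?_⟩
  rw [hcl]
  exact hfpp.of_homeomorph <| .symm <| (IsEmbedding.subtypeVal.homeomorphImage _).trans <|
    .setCongr (Subtype.image_preimage_coe _ _ ▸ inter_eq_right.2 hfillX)

theorem hasLFPP_of_forall_not_connectedComponentIn_subset [CompactSpace X]
    [LocallyConnectedSpace X]
    (hX : ∀ p : X, ∃ ε > 0, ∀ u ∉ X, ¬ connectedComponentIn Xᶜ u ⊆ ball (p : ℂ) ε) :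
    HasLFPP X := by
  refine ⟨{B | IsOpen B ∧ HasFPP (closure B)},
    TopologicalSpace.isTopologicalBasis_of_isOpen_of_nhds (fun _ hB ↦ hB.1) fun p V hp hV ↦ ?_,
    fun _ hB ↦ hB.2⟩
  obtain ⟨ε, hε, hhole⟩ := hX p
  obtain ⟨ε', hε', hV⟩ := Metric.isOpen_iff.1 hV p hp
  obtain ⟨r, hr, hrε⟩ := exists_between (lt_min hε hε')
  obtain ⟨B, hB, hpB, hBr, hfpp⟩ := exists_isOpen_hasFPP_closure p hr fun u hu hsub ↦
    hhole u hu (hsub.trans (closedBall_subset_ball (hrε.trans_le (min_le_left _ _))))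
  exact ⟨B, ⟨hB, hfpp⟩, hpB,
    hBr.trans ((closedBall_subset_ball (hrε.trans_le (min_le_right _ _))).trans hV)⟩

theorem _root_.HasWLPPP.hasLFPP [CompactSpace X] [LocallyConnectedSpace X] (h : HasWLPPP X) :
    HasLFPP X := by
  have : LocallyPathConnectedSpace X := uniformlyLocallyConnected_univ.locallyPathConnectedSpace
  exact hasLFPP_of_forall_not_connectedComponentIn_subset
    (h.exists_not_connectedComponentIn_subset_ball (isCompact_iff_compactSpace.2 ‹_›).isClosed)

end Holes
end PlaneContinuum

open Topology in
theorem stmt_1_general {Y : Type*} [TopologicalSpace Y] [CompactSpace Y] [LocallyConnectedSpace Y]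
    {e : Y → ℂ} (he : IsEmbedding e) :
    List.TFAE [HasWLFPP Y, HasLFPP Y, HasWLPPP Y, HasLPPP Y] := by
  let φ : Y ≃ₜ Set.range e := he.toHomeomorph
  have : CompactSpace (Set.range e) := φ.compactSpace
  have : LocallyConnectedSpace (Set.range e) := φ.symm.isOpenEmbedding.locallyConnectedSpace
  tfae_have 2 → 1 := HasLFPP.hasWLFPP
  tfae_have 2 → 4 := HasLFPP.hasLPPP
  tfae_have 1 → 3 := HasWLFPP.hasWLPPP
  tfae_have 4 → 3 := HasLPPP.hasWLPPP
  tfae_have 3 → 2 := fun h ↦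
    (h.of_homeomorph φ).hasLFPP.of_homeomorph φ.symm
  tfae_finish

/-- For a locally connected continuum in the plane, wLFPP, LFPP, wLPPP and LPPP are
mutually equivalent. -/
theorem stmt_1 (X : Set (EuclideanSpace ℝ (Fin 2)))
    (hcomp : IsCompact X) (hconn : IsConnected X)
    (hlc : LocallyConnectedSpace ↥X) :
    List.TFAE [HasWLFPP ↥X, HasLFPP ↥X, HasWLPPP ↥X, HasLPPP ↥X] :=
  have := isCompact_iff_compactSpace.1 hcomp
  stmt_1_general <| Complex.orthonormalBasisOneI.repr.symm.toHomeomorph.isEmbedding.comp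
    Topology.IsEmbedding.subtypeVal
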